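/- Let $p\equiv 1\pmod 4$ be prime, $n=(p-1)/2$, $\varepsilon$ the fundamental unit and $h$ the class number of $\mathbb{Q}(\sqrt p)$. Define $a$ by $a+b\sqrt p = \varepsilon^{h}$ if $p\equiv 1\pmod 8$ and $a+b\sqrt p = \varepsilon^{3h}$ if $p\equiv 5\pmod 8$ (with $a,b\in\tfrac12\mathbb{Z}$). Let $C$ be the $(n+1)\times(n+1)$ matrix with $C_{ij}=(\tfrac{j-i}{p})$, $0\le i,j\le n$. Then $\det C = -a$. -/

import Mathlib

/-!
Let `φ` be an injective additive character of `ℤ / p` and `F e = ∏ (1 - φ x)`, the product over the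
`x` with Legendre symbol `e = ±1`. A Vandermonde change of basis at the nodes `φ x ^ 2`, with `x`
zero or a residue, resp. zero or a nonresidue, turns the matrix of Legendre symbols, up to a Gauss
sum and row and column factors, into the matrix `(φ y - φ x) / (1 - φ x * φ y)`. Its row and column
at `0` border a matrix that becomes a row- and column-scaled Cauchy matrix when the all-ones matrix
is added or subtracted, so its determinant is a difference of two Cauchy determinants. The result
is, with `s = (2 / p)` and `g` the Gauss sum of `φ`,
`2 * g * det C = F 1 * F (-s) / F (-1) - F (-1) * F s / F 1`.

Choose `φ` so that `g = √p`. Then `F 1 * F (-1) = p`, and the value of `L(1, χ)` together with the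
class number formula gives `F (-1) / F 1 = ε ^ (2 * h)`, so that `2 * det C = x⁻¹ - x` for
`x = ε ^ h` (if `s = 1`) or `x = ε ^ (3 * h)` (if `s = -1`). Hence `x` is a root of
`X ^ 2 + 2 * det C * X - 1`, and its rational part is `-det C`.
-/

namespace EvilDeterminant

open Finset Matrix Polynomial

/-! ### The Cauchy determinant and bordered matrices -/

section CauchyDeterminant

variable {R : Type*} [Field R] {n : ℕ}

/-- The product of the `1 - v k * X` over all `k ≠ j`: evaluated at `u i` it is the `(i, j)` entry
of the Cauchy matrix `1 / (1 - u i * v j)` after its `i`-th row has been cleared of denominators. -/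
noncomputable def cauchyCofactor (v : Fin n → R) (j : Fin n) : R[X] :=
  ∏ k ∈ univ.erase j, (1 - C (v k) * X)

lemma eval_cauchyCofactor (v : Fin n → R) (j : Fin n) (z : R) :
    (cauchyCofactor v j).eval z = ∏ k ∈ univ.erase j, (1 - z * v k) := by
  simp [cauchyCofactor, eval_prod, mul_comm z]

lemma natDegree_cauchyCofactor_lt (v : Fin n → R) (j : Fin n) :
    (cauchyCofactor v j).natDegree < n := by
  have hdeg : (cauchyCofactor v j).natDegree ≤ ∑ k ∈ univ.erase j, 1 :=
    (natDegree_prod_le _ _).trans (sum_le_sum fun k _ => by compute_degree)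
  rw [← card_eq_sum_ones, card_erase_of_mem (mem_univ j), card_univ, Fintype.card_fin] at hdeg
  have := j.isLt
  omega

lemma det_eval_cauchyCofactor (u v : Fin n → R) :
    (Matrix.of fun i j => (cauchyCofactor v j).eval (u i)).det =
      (vandermonde u).det * (Matrix.of fun k j : Fin n => (cauchyCofactor v j).coeff k).det := by
  rw [← det_mul]
  congr 1
  ext i j
  simp only [of_apply, mul_apply, vandermonde_apply]
  rw [eval_eq_sum_range' (natDegree_cauchyCofactor_lt v j),
    ← Fin.sum_univ_eq_sum_range fun k => (cauchyCofactor v j).coeff k * u i ^ k]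
  exact sum_congr rfl fun k _ => mul_comm _ _

lemma det_eval_inv_cauchyCofactor {v : Fin n → R} (hv0 : ∀ i, v i ≠ 0) :
    (Matrix.of fun i j => (cauchyCofactor v j).eval (v i)⁻¹).det =
      ∏ i : Fin n, ∏ j ∈ Ioi i, (1 - v j * (v i)⁻¹) * (1 - v i * (v j)⁻¹) := by
  have hdiag : (Matrix.of fun i j => (cauchyCofactor v j).eval (v i)⁻¹) =
      diagonal fun j => ∏ k ∈ {j}ᶜ, (1 - v k * (v j)⁻¹) := by
    ext i j
    rw [of_apply, eval_cauchyCofactor]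
    by_cases hij : i = j
    · subst hij
      rw [diagonal_apply_eq, compl_singleton]
      exact prod_congr rfl fun k _ => by rw [mul_comm]
    · rw [diagonal_apply_ne _ hij]
      exact prod_eq_zero (mem_erase.2 ⟨hij, mem_univ i⟩) (by rw [inv_mul_cancel₀ (hv0 i), sub_self])
  rw [hdiag, det_diagonal,
    ← prod_prod_Ioi_mul_eq_prod_prod_off_diag fun k j => 1 - v k * (v j)⁻¹]

-- The nodes `(v i)⁻¹` diagonalize the cofactors, so the coefficient determinant can be read off.
lemma det_coeff_cauchyCofactor {v : Fin n → R} (hv : Function.Injective v) (hv0 : ∀ i, v i ≠ 0) :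
    (Matrix.of fun k j : Fin n => (cauchyCofactor v j).coeff k).det = (vandermonde v).det := by
  have hne : (vandermonde fun i => (v i)⁻¹).det ≠ 0 :=
    det_vandermonde_ne_zero_iff.2 (inv_injective.comp hv)
  apply mul_left_cancel₀ hne
  rw [← det_eval_cauchyCofactor, det_eval_inv_cauchyCofactor hv0, det_vandermonde, det_vandermonde,
    ← prod_mul_distrib]
  refine prod_congr rfl fun i _ => ?_
  rw [← prod_mul_distrib]
  refine prod_congr rfl fun j _ => ?_
  have := hv0 i
  have := hv0 j
  field_simp

theorem det_cauchy_mul_prod (u : Fin n → R) {v : Fin n → R} (hv : Function.Injective v)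
    (hv0 : ∀ i, v i ≠ 0) (h : ∀ i j, 1 - u i * v j ≠ 0) :
    (Matrix.of fun i j => (1 - u i * v j)⁻¹).det * ∏ i, ∏ j, (1 - u i * v j) =
      (vandermonde u).det * (vandermonde v).det := by
  rw [← det_coeff_cauchyCofactor hv hv0, ← det_eval_cauchyCofactor, mul_comm, ← det_mul_column]
  congr 1
  ext i j
  rw [of_apply, of_apply, of_apply, eval_cauchyCofactor, ← mul_prod_erase univ _ (mem_univ j),
    mul_comm (1 - u i * v j), mul_assoc, mul_inv_cancel₀ (h i j), mul_one]

end CauchyDeterminant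

section Bordered

variable {R : Type*} [CommRing R] {n : ℕ}

/-- The square matrix `W` bordered by a first row `r` and a first column of ones
(below the corner entry `r 0`). -/
def bordered (W : Matrix (Fin n) (Fin n) R) (r : Fin (n + 1) → R) :
    Matrix (Fin (n + 1)) (Fin (n + 1)) R :=
  Matrix.of (Fin.cons r fun i => Fin.cons 1 (W i))

lemma bordered_eq_updateRow (W : Matrix (Fin n) (Fin n) R) (r : Fin (n + 1) → R) :
    bordered W r = updateRow (bordered W 0) 0 r := by
  ext i j
  refine Fin.cases ?_ (fun i => ?_) i <;> simp [bordered, updateRow_apply]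

lemma det_bordered_add_smul (W : Matrix (Fin n) (Fin n) R) (r s : Fin (n + 1) → R) (c : R) :
    (bordered W (r + c • s)).det = (bordered W r).det + c * (bordered W s).det := by
  rw [bordered_eq_updateRow W (r + c • s), bordered_eq_updateRow W r, bordered_eq_updateRow W s,
    det_updateRow_add, det_updateRow_smul]

lemma det_bordered_cons_one_zero (W : Matrix (Fin n) (Fin n) R) :
    (bordered W (Fin.cons 1 0)).det = W.det := by
  rw [det_succ_row_zero, Fin.sum_univ_succ]
  simp only [bordered, of_apply, Fin.cons_zero, Fin.cons_succ, Pi.zero_apply, mul_zero, zero_mul,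
    sum_const_zero, add_zero, Fin.val_zero, pow_zero, one_mul]
  congr 1

lemma det_bordered_cons_one (W : Matrix (Fin n) (Fin n) R) (c : R) :
    (bordered W (Fin.cons 1 fun _ => -c)).det = (W + Matrix.of fun _ _ => c).det := by
  rw [← det_bordered_cons_one_zero (W + _), ← det_transpose, ← det_transpose (bordered (W + _) _)]
  refine det_eq_of_forall_row_eq_smul_add_const (Fin.cons 0 fun _ => -c) 0 (by simp) fun i j => ?_
  refine Fin.cases ?_ (fun i => ?_) i <;> refine Fin.cases ?_ (fun j => ?_) j <;>
    simp [bordered, Matrix.add_apply]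

theorem two_mul_det_bordered (W : Matrix (Fin n) (Fin n) R) :
    2 * (bordered W (Fin.cons 0 fun _ => -1)).det =
      (W + Matrix.of fun _ _ => 1).det - (W + Matrix.of fun _ _ => -1).det := by
  have hrow : (Fin.cons 1 fun _ => -1 : Fin (n + 1) → R) =
      (Fin.cons 1 fun _ => - -1) + (2 : R) • (Fin.cons 0 fun _ => -1) := by
    ext i
    refine Fin.cases ?_ (fun i => ?_) i
    · simp
    · simp only [Fin.cons_succ, Pi.add_apply, Pi.smul_apply, smul_eq_mul]
      ring
  rw [← det_bordered_cons_one, ← det_bordered_cons_one, hrow, det_bordered_add_smul]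
  ring

end Bordered

/-- The matrix `(v j - u i) / (1 - u i * v j)`: adding or subtracting the all-ones matrix turns it
into a Cauchy matrix with rescaled rows and columns. -/
def cauchyDifference {R : Type*} [Field R] {n : ℕ} (u v : Fin n → R) :
    Matrix (Fin n) (Fin n) R :=
  Matrix.of fun i j => (v j - u i) / (1 - u i * v j)

section CauchyDifference

variable {R : Type*} [Field R] {n : ℕ} {u v : Fin n → R}

lemma det_cauchyDifference_add_one (h : ∀ i j, 1 - u i * v j ≠ 0) :
    (cauchyDifference u v + Matrix.of fun _ _ => 1).det =
      (∏ i, (1 - u i)) * ((∏ j, (1 + v j)) * (Matrix.of fun i j => (1 - u i * v j)⁻¹).det) := by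
  rw [← det_mul_row, ← det_mul_column]
  congr 1
  ext i j
  simp only [Matrix.add_apply, of_apply, cauchyDifference]
  linear_combination -mul_inv_cancel₀ (h i j)

lemma det_cauchyDifference_sub_one (hn : Even n) (h : ∀ i j, 1 - u i * v j ≠ 0) :
    (cauchyDifference u v + Matrix.of fun _ _ => -1).det =
      (∏ i, (1 + u i)) * ((∏ j, (1 - v j)) * (Matrix.of fun i j => (1 - u i * v j)⁻¹).det) := by
  have hneg : ∏ i, (1 + u i) = ∏ i, -(1 + u i) := by
    rw [prod_neg, card_univ, Fintype.card_fin, hn.neg_one_pow, one_mul]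
  rw [hneg, ← det_mul_row, ← det_mul_column]
  congr 1
  ext i j
  simp only [Matrix.add_apply, of_apply, cauchyDifference]
  linear_combination mul_inv_cancel₀ (h i j)

theorem two_mul_det_bordered_cauchyDifference (hn : Even n) (hv : Function.Injective v)
    (hv0 : ∀ i, v i ≠ 0) (h : ∀ i j, 1 - u i * v j ≠ 0) :
    2 * (bordered (cauchyDifference u v) (Fin.cons 0 fun _ => -1)).det *
        ∏ i, ∏ j, (1 - u i * v j) =
      (vandermonde u).det * (vandermonde v).det *
        ((∏ i, (1 - u i)) * (∏ j, (1 + v j)) - (∏ i, (1 + u i)) * ∏ j, (1 - v j)) := by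
  rw [two_mul_det_bordered, ← det_cauchy_mul_prod u hv hv0 h, det_cauchyDifference_add_one h,
    det_cauchyDifference_sub_one hn h]
  ring

end CauchyDifference

/-! ### Squares and nonsquares in a finite field -/

lemma ringChar_ne_two_of_card {F : Type*} [Field F] [Fintype F] {m : ℕ}
    (hcard : Fintype.card F = 4 * m + 1) : ringChar F ≠ 2 := fun h =>
  absurd (FiniteField.even_card_of_char_two h) (by omega)

section ResidueClass

variable {F : Type*} [Field F] [Fintype F] [DecidableEq F]

/-- The nonzero elements of a finite field with quadratic character `e`: the nonzero squares for
`e = 1` and the nonsquares for `e = -1`. -/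
def residueClass (F : Type*) [Field F] [Fintype F] [DecidableEq F] (e : ℤˣ) : Finset F :=
  {t | quadraticChar F t = e}

lemma mem_residueClass {e : ℤˣ} {t : F} : t ∈ residueClass F e ↔ quadraticChar F t = e := by
  rw [residueClass, mem_filter_univ]

lemma ne_zero_of_quadraticChar_eq {e : ℤˣ} {t : F} (ht : quadraticChar F t = e) : t ≠ 0 :=
  fun h => e.ne_zero (ht.symm.trans (quadraticChar_eq_zero_iff.2 h))

lemma ne_zero_of_mem_residueClass {e : ℤˣ} {t : F} (ht : t ∈ residueClass F e) : t ≠ 0 :=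
  ne_zero_of_quadraticChar_eq (mem_residueClass.1 ht)

lemma zero_notMem_residueClass (e : ℤˣ) : (0 : F) ∉ residueClass F e :=
  fun h => ne_zero_of_mem_residueClass h rfl

lemma disjoint_residueClass_neg (e : ℤˣ) :
    Disjoint (residueClass F e) (residueClass F (-e)) := by
  refine disjoint_filter.2 fun t _ h h' => units_ne_neg_self e (Units.ext ?_)
  rw [← h, h']

lemma sub_ne_zero_of_mem_residueClass {e : ℤˣ} {x y : F} (hx : x ∈ residueClass F e)
    (hy : y ∈ residueClass F (-e)) : y - x ≠ 0 := fun h =>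
  disjoint_left.1 (disjoint_residueClass_neg e) hx (sub_eq_zero.1 h ▸ hy)

lemma insert_zero_residueClass_union (e : ℤˣ) :
    insert 0 (residueClass F e ∪ residueClass F (-e)) = univ := by
  refine eq_univ_of_forall fun t => ?_
  rw [mem_insert, mem_union, mem_residueClass, mem_residueClass]
  by_cases ht : t = 0
  · exact Or.inl ht
  · rcases quadraticChar_dichotomy ht with h | h <;> rcases Int.units_eq_one_or e with rfl | rfl <;>
      simp [h]

lemma zero_notMem_residueClass_union (e : ℤˣ) :
    (0 : F) ∉ residueClass F e ∪ residueClass F (-e) := fun h =>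
  (mem_union.1 h).elim (zero_notMem_residueClass e) (zero_notMem_residueClass (-e))

lemma sum_univ_eq_sum_residueClass {M : Type*} [AddCommMonoid M] (e : ℤˣ) (f : F → M) :
    ∑ t, f t = f 0 + ((∑ t ∈ residueClass F e, f t) + ∑ t ∈ residueClass F (-e), f t) := by
  rw [← insert_zero_residueClass_union e, sum_insert (zero_notMem_residueClass_union e),
    sum_union (disjoint_residueClass_neg e)]

lemma mul_mem_residueClass {e s : ℤˣ} {t x : F} (ht : quadraticChar F t = s)
    (hx : x ∈ residueClass F e) : t * x ∈ residueClass F (s * e) := by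
  rw [mem_residueClass, map_mul, ht, mem_residueClass.1 hx, Units.val_mul]

lemma image_mul_residueClass (e : ℤˣ) {s : ℤˣ} {t : F} (ht : quadraticChar F t = s) :
    (residueClass F e).image (t * ·) = residueClass F (s * e) := by
  have ht0 := ne_zero_of_quadraticChar_eq ht
  have hinv : quadraticChar F t⁻¹ = s := by
    refine mul_left_cancel₀ s.ne_zero ?_
    rw [← Units.val_mul, Int.units_mul_self, ← ht, ← map_mul, mul_inv_cancel₀ ht0, map_one,
      Units.val_one]
  ext x
  refine ⟨fun hx => ?_, fun hx => mem_image.2 ⟨t⁻¹ * x, ?_, mul_inv_cancel_left₀ ht0 x⟩⟩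
  · obtain ⟨y, hy, rfl⟩ := mem_image.1 hx
    exact mul_mem_residueClass ht hy
  · simpa only [← mul_assoc, Int.units_mul_self, one_mul] using mul_mem_residueClass hinv hx

lemma prod_residueClass_mul {M : Type*} [CommMonoid M] (e : ℤˣ) {s : ℤˣ} {t : F}
    (ht : quadraticChar F t = s) (f : F → M) :
    ∏ x ∈ residueClass F e, f (t * x) = ∏ x ∈ residueClass F (s * e), f x := by
  rw [← image_mul_residueClass e ht,
    prod_image ((mul_right_injective₀ (ne_zero_of_quadraticChar_eq ht)).injOn)]

section NegOneSquare

variable (hneg : quadraticChar F (-1) = 1)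
include hneg

lemma neg_mem_residueClass {e : ℤˣ} {x : F} (hx : x ∈ residueClass F e) :
    -x ∈ residueClass F e := by
  rw [← neg_one_mul, ← one_mul e]
  exact mul_mem_residueClass hneg hx

lemma prod_residueClass_neg {M : Type*} [CommMonoid M] (e : ℤˣ) (f : F → M) :
    ∏ x ∈ residueClass F e, f (-x) = ∏ x ∈ residueClass F e, f x := by
  simpa only [neg_one_mul, one_mul] using prod_residueClass_mul e (s := 1) hneg f

lemma sum_residueClass_neg {M : Type*} [AddCommMonoid M] (e : ℤˣ) (f : F → M) :
    ∑ x ∈ residueClass F e, f (-x) = ∑ x ∈ residueClass F e, f x :=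
  prod_residueClass_neg hneg (M := Multiplicative M) e f

lemma sum_residueClass_eq_zero (h2 : (2 : F) ≠ 0) (e : ℤˣ) : ∑ x ∈ residueClass F e, x = 0 := by
  have h := sum_residueClass_neg hneg e fun x : F => x
  rw [sum_neg_distrib] at h
  have h2S : 2 * ∑ x ∈ residueClass F e, x = 0 := by linear_combination -h
  exact (mul_eq_zero.1 h2S).resolve_left h2

lemma card_residueClass_sub_le_mul (e : ℤˣ) {s : F} (hs : s ≠ 0) (t : F) :
    #{z ∈ residueClass F e ×ˢ residueClass F (-e) | z.2 - z.1 = t} ≤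
      #{z ∈ residueClass F e ×ˢ residueClass F (-e) | z.2 - z.1 = s * t} := by
  rcases quadraticChar_dichotomy hs with h | h
  · refine card_le_card_of_injOn (fun z => (s * z.1, s * z.2)) (fun z hz => ?_)
      fun z _ w _ hzw => ?_
    · obtain ⟨⟨hx, hy⟩, hzt⟩ := by simpa only [mem_coe, mem_filter, mem_product] using hz
      simp only [mem_coe, mem_filter, mem_product, ← hzt, ← mul_sub, and_true]
      have hscale := fun e' x => mul_mem_residueClass (e := e') (s := 1) (x := x) h
      simp only [one_mul] at hscale
      exact ⟨hscale _ _ hx, hscale _ _ hy⟩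
    · simpa only [Prod.mk.injEq, mul_right_inj' hs, ← Prod.ext_iff] using hzw
  · refine card_le_card_of_injOn (fun z => (-(s * z.2), -(s * z.1))) (fun z hz => ?_)
      fun z _ w _ hzw => ?_
    · obtain ⟨⟨hx, hy⟩, hzt⟩ := by simpa only [mem_coe, mem_filter, mem_product] using hz
      simp only [mem_coe, mem_filter, mem_product]
      have hscale := fun e' x hx =>
        neg_mem_residueClass hneg (mul_mem_residueClass (e := e') (s := -1) (x := x) h hx)
      simp only [neg_one_mul] at hscale
      refine ⟨⟨by simpa only [neg_neg] using hscale _ _ hy, hscale _ _ hx⟩, ?_⟩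
      rw [← hzt]
      ring
    · simp only [Prod.mk.injEq, neg_inj, mul_right_inj' hs] at hzw
      exact Prod.ext hzw.2 hzw.1

end NegOneSquare

lemma card_residueClass (hF : ringChar F ≠ 2) (e : ℤˣ) :
    2 * #(residueClass F e) + 1 = Fintype.card F := by
  have hsum := quadraticChar_sum_zero hF
  have hcard := sum_univ_eq_sum_residueClass e (fun _ : F => 1)
  rw [sum_univ_eq_sum_residueClass e, quadraticChar_zero, zero_add,
    sum_congr rfl fun t ht => mem_residueClass.1 ht,
    sum_congr rfl fun t ht => mem_residueClass.1 ht, sum_const, sum_const, nsmul_eq_mul,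
    nsmul_eq_mul, Units.val_neg] at hsum
  have heq : (#(residueClass F e) : ℤ) = #(residueClass F (-e)) :=
    mul_right_cancel₀ e.ne_zero (by linear_combination hsum)
  simp only [sum_const, card_univ, smul_eq_mul, mul_one] at hcard
  omega

section CardFourMulAddOne

variable {m : ℕ} (hcard : Fintype.card F = 4 * m + 1)
include hcard

lemma quadraticChar_neg_one_of_card : quadraticChar F (-1) = 1 := by
  rw [quadraticChar_neg_one (ringChar_ne_two_of_card hcard), ZMod.χ₄_nat_one_mod_four (by omega)]

lemma card_residueClass_eq (e : ℤˣ) : #(residueClass F e) = 2 * m := by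
  have := card_residueClass (ringChar_ne_two_of_card hcard) e
  omega

-- The number of representations is unchanged under scaling `t`, hence is the average over `t ≠ 0`.
lemma card_residueClass_sub_eq (e : ℤˣ) {t : F} (ht : t ≠ 0) :
    #{z ∈ residueClass F e ×ˢ residueClass F (-e) | z.2 - z.1 = t} = m := by
  have hneg := quadraticChar_neg_one_of_card hcard
  set N : F → ℕ := fun s => #{z ∈ residueClass F e ×ˢ residueClass F (-e) | z.2 - z.1 = s}
  have hle : ∀ s r : F, s ≠ 0 → r ≠ 0 → N s ≤ N r := fun s r hs hr => by
    simpa only [div_mul_cancel₀ r hs] using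
      card_residueClass_sub_le_mul hneg e (div_ne_zero hr hs) s
  have hmaps : ∀ z ∈ residueClass F e ×ˢ residueClass F (-e), z.2 - z.1 ∈ univ.erase (0 : F) :=
    fun z hz => mem_erase.2 ⟨sub_ne_zero_of_mem_residueClass (mem_product.1 hz).1
      (mem_product.1 hz).2, mem_univ _⟩
  have hcount := card_eq_sum_card_fiberwise hmaps
  rw [card_product, card_residueClass_eq hcard, card_residueClass_eq hcard,
    sum_congr rfl fun s hs => (hle s t (ne_of_mem_erase hs) ht).antisymm
      (hle t s ht (ne_of_mem_erase hs)), sum_const, card_erase_of_mem (mem_univ _), card_univ,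
    hcard, Nat.add_sub_cancel, smul_eq_mul] at hcount
  have hm : m ≠ 0 := by
    rintro rfl
    exact absurd (Fintype.one_lt_card (α := F)) (by omega)
  refine mul_left_cancel₀ (mul_ne_zero four_ne_zero hm) ?_
  rw [← hcount]
  ring

theorem prod_prod_residueClass_sub {M : Type*} [CommMonoid M] (e : ℤˣ) (f : F → M) :
    ∏ x ∈ residueClass F e, ∏ y ∈ residueClass F (-e), f (y - x) =
      ((∏ x ∈ residueClass F e, f x) * ∏ x ∈ residueClass F (-e), f x) ^ m := by
  have hmaps : ∀ z ∈ residueClass F e ×ˢ residueClass F (-e),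
      z.2 - z.1 ∈ residueClass F e ∪ residueClass F (-e) := fun z hz => by
    refine mem_of_mem_insert_of_ne ?_
      (sub_ne_zero_of_mem_residueClass (mem_product.1 hz).1 (mem_product.1 hz).2)
    rw [insert_zero_residueClass_union]
    exact mem_univ _
  rw [← prod_product', ← prod_fiberwise_of_maps_to hmaps,
    ← prod_union (disjoint_residueClass_neg e), ← prod_pow]
  refine prod_congr rfl fun t ht => ?_
  have ht0 : t ≠ 0 := fun h => zero_notMem_residueClass_union e (h ▸ ht)
  rw [prod_congr rfl fun z hz => congrArg f (mem_filter.1 hz).2, prod_const,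
    card_residueClass_sub_eq hcard e ht0]

end CardFourMulAddOne

end ResidueClass

/-! ### Products of additive characters over squares and nonsquares -/

section AdditiveCharacter

variable {p m : ℕ} [Fact p.Prime] {R : Type*} [Field R] {ψ : AddChar (ZMod p) R}

/-- The product of `1 - ψ x` over all `x` of quadratic character `e`. For `p ≡ 1 (mod 4)` the two
products with `e = 1` and `e = -1` are conjugate elements of `ℚ(√p)` of norm `p`. -/
noncomputable def cyclotomicProd (ψ : AddChar (ZMod p) R) (e : ℤˣ) : R :=
  ∏ x ∈ residueClass (ZMod p) e, (1 - ψ x)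

lemma isPrimitiveRoot_of_injective (hψ : Function.Injective ψ) : IsPrimitiveRoot (ψ 1) p := by
  have hpow (k : ℕ) : ψ 1 ^ k = ψ k := by
    rw [← AddChar.map_nsmul_eq_pow, nsmul_eq_mul, mul_one]
  refine ⟨by rw [hpow, ZMod.natCast_self, AddChar.map_zero_eq_one], fun k hk => ?_⟩
  rw [hpow, ← AddChar.map_zero_eq_one ψ] at hk
  exact (ZMod.natCast_eq_zero_iff _ _).1 (hψ hk)

lemma isPrimitive_of_injective (hψ : Function.Injective ψ) : ψ.IsPrimitive :=
  AddChar.IsPrimitive.of_ne_one fun h => zero_ne_one (α := ZMod p) (hψ (by simp [h]))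

lemma one_sub_ne_zero_of_injective (hψ : Function.Injective ψ) {t : ZMod p} (ht : t ≠ 0) :
    1 - ψ t ≠ 0 := fun h => ht (hψ (by rw [AddChar.map_zero_eq_one, sub_eq_zero.1 h]))

lemma pow_two_injective (hp : p ≠ 2) {φ : AddChar (ZMod p) R} (hφ : Function.Injective φ) :
    Function.Injective (φ ^ 2 : AddChar (ZMod p) R) := fun x y h => by
  have h2 : IsUnit (2 : ZMod p) := by
    rw [← Nat.cast_two, ZMod.isUnit_iff_coprime, Nat.coprime_two_left]
    exact (Fact.out : p.Prime).odd_of_ne_two hp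
  rw [AddChar.pow_apply, AddChar.pow_apply, ← AddChar.map_nsmul_eq_pow,
    ← AddChar.map_nsmul_eq_pow, two_nsmul, two_nsmul, ← two_mul, ← two_mul] at h
  exact h2.mul_right_injective (hφ h)

lemma addChar_sum {A M ι : Type*} [AddCommMonoid A] [CommMonoid M] (ψ : AddChar A M)
    (s : Finset ι) (a : ι → A) : ψ (∑ i ∈ s, a i) = ∏ i ∈ s, ψ (a i) :=
  map_prod ψ.toMonoidHom (fun i => Multiplicative.ofAdd (a i)) s

lemma prod_erase_zero_one_sub (hψ : Function.Injective ψ) :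
    ∏ t ∈ univ.erase (0 : ZMod p), (1 - ψ t) = p := by
  obtain ⟨n, rfl⟩ := Nat.exists_eq_succ_of_ne_zero (Fact.out : p.Prime).ne_zero
  have h := (isPrimitiveRoot_of_injective hψ).prod_one_sub_pow_eq_order
  rw [Nat.cast_succ, ← h]
  symm
  refine prod_bij (fun k _ => ((k + 1 : ℕ) : ZMod (n + 1))) (fun k hk => ?_)
    (fun k hk l hl hkl => ?_) (fun t ht => ?_) fun k _ => ?_
  · refine mem_erase.2 ⟨fun h0 => ?_, mem_univ _⟩
    have := Nat.le_of_dvd k.succ_pos ((ZMod.natCast_eq_zero_iff _ _).1 h0)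
    have := mem_range.1 hk
    omega
  · have hval := congrArg ZMod.val hkl
    rw [ZMod.val_natCast_of_lt (by simpa using hk), ZMod.val_natCast_of_lt (by simpa using hl)]
      at hval
    omega
  · have hpos := Nat.pos_of_ne_zero ((ZMod.val_ne_zero t).2 (ne_of_mem_erase ht))
    have := t.val_lt
    exact ⟨t.val - 1, mem_range.2 (by omega), by
      rw [Nat.sub_add_cancel hpos, ZMod.natCast_zmod_val]⟩
  · rw [← AddChar.map_nsmul_eq_pow, nsmul_eq_mul, mul_one]

lemma prod_erase_sub_mul (hψ : Function.Injective ψ) (x : ZMod p) :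
    (∏ t ∈ univ.erase x, (ψ x - ψ t)) * ψ x = p := by
  have hfactor (t : ZMod p) : ψ x - ψ t = ψ x * (1 - ψ (t - x)) := by
    rw [mul_sub, ← AddChar.map_add_eq_mul, add_sub_cancel, mul_one]
  have hshift : ∏ t ∈ univ.erase x, (1 - ψ (t - x)) = ∏ t ∈ univ.erase 0, (1 - ψ t) :=
    prod_equiv (Equiv.subRight x) (fun t => by simp [sub_eq_zero]) fun t _ => rfl
  have hperiod : ψ x ^ p = 1 := by rw [← AddChar.map_nsmul_eq_pow]; simp
  simp_rw [hfactor, prod_mul_distrib]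
  rw [prod_const, card_erase_of_mem (mem_univ x), card_univ, ZMod.card, hshift,
    prod_erase_zero_one_sub hψ, mul_right_comm, ← pow_succ,
    Nat.sub_add_cancel (Fact.out : p.Prime).one_le, hperiod, one_mul]

lemma prod_erase_insert_zero_residueClass (hψ : Function.Injective ψ) {e : ℤˣ} {x : ZMod p}
    (hx : x ∈ insert 0 (residueClass (ZMod p) e)) :
    (∏ y ∈ (insert 0 (residueClass (ZMod p) e)).erase x, (ψ x - ψ y)) *
      (∏ y ∈ residueClass (ZMod p) (-e), (ψ x - ψ y)) * ψ x = p := by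
  have hdisj : Disjoint (insert 0 (residueClass (ZMod p) e)) (residueClass (ZMod p) (-e)) :=
    disjoint_insert_left.2 ⟨zero_notMem_residueClass (-e), disjoint_residueClass_neg e⟩
  rw [← prod_union (disjoint_of_subset_left (erase_subset _ _) hdisj),
    ← prod_erase_sub_mul hψ x, ← insert_zero_residueClass_union e, ← insert_union,
    erase_union_distrib, erase_eq_of_notMem fun h => (disjoint_left.1 hdisj hx h).elim]

lemma prod_erase_residueClass (hψ : Function.Injective ψ) {e : ℤˣ} {x : ZMod p}
    (hx : x ∈ residueClass (ZMod p) e) :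
    (ψ x - 1) * (∏ y ∈ (residueClass (ZMod p) e).erase x, (ψ x - ψ y)) *
      (∏ y ∈ residueClass (ZMod p) (-e), (ψ x - ψ y)) * ψ x = p := by
  rw [← prod_erase_insert_zero_residueClass hψ (mem_insert_of_mem hx),
    erase_insert_of_ne (ne_zero_of_mem_residueClass hx).symm, prod_insert fun h =>
      zero_notMem_residueClass e (mem_of_mem_erase h), AddChar.map_zero_eq_one]

theorem cyclotomicProd_mul_cyclotomicProd_neg (hψ : Function.Injective ψ) (e : ℤˣ) :
    cyclotomicProd ψ e * cyclotomicProd ψ (-e) = p := by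
  rw [← prod_erase_zero_one_sub hψ, ← insert_zero_residueClass_union e,
    erase_insert (zero_notMem_residueClass_union e), prod_union (disjoint_residueClass_neg e)]
  rfl

lemma cyclotomicProd_ne_zero (hψ : Function.Injective ψ) (e : ℤˣ) : cyclotomicProd ψ e ≠ 0 :=
  prod_ne_zero_iff.2 fun _ hx => one_sub_ne_zero_of_injective hψ (ne_zero_of_mem_residueClass hx)

lemma cyclotomicProd_mulShift {t : ZMod p} {s : ℤˣ} (ht : quadraticChar (ZMod p) t = s) (e : ℤˣ) :
    cyclotomicProd (ψ.mulShift t) e = cyclotomicProd ψ (s * e) :=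
  prod_residueClass_mul e ht fun x => 1 - ψ x

section

variable (hp : p = 4 * m + 1)
include hp

lemma zmod_card_eq : Fintype.card (ZMod p) = 4 * m + 1 := by rw [ZMod.card, hp]

lemma two_ne_zero_zmod : (2 : ZMod p) ≠ 0 :=
  Ring.two_ne_zero (ringChar_ne_two_of_card (zmod_card_eq hp))

lemma prod_residueClass_addChar (ψ : AddChar (ZMod p) R) (e : ℤˣ) :
    ∏ x ∈ residueClass (ZMod p) e, ψ x = 1 := by
  rw [← addChar_sum, sum_residueClass_eq_zero
    (quadraticChar_neg_one_of_card (zmod_card_eq hp)) (two_ne_zero_zmod hp),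
    AddChar.map_zero_eq_one]

lemma prod_prod_one_sub_addChar_sub (hψ : Function.Injective ψ) (e : ℤˣ) :
    ∏ x ∈ residueClass (ZMod p) e, ∏ y ∈ residueClass (ZMod p) (-e), (1 - ψ (y - x)) =
      (p : R) ^ m := by
  rw [prod_prod_residueClass_sub (zmod_card_eq hp) e fun t => 1 - ψ t]
  exact congrArg (· ^ m) (cyclotomicProd_mul_cyclotomicProd_neg hψ e)

lemma prod_prod_addChar_sub_addChar (hψ : Function.Injective ψ) (e : ℤˣ) :
    ∏ x ∈ residueClass (ZMod p) e, ∏ y ∈ residueClass (ZMod p) (-e), (ψ x - ψ y) =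
      (p : R) ^ m := by
  have hfactor (x y : ZMod p) : ψ x - ψ y = ψ x * (1 - ψ (y - x)) := by
    rw [mul_sub, ← AddChar.map_add_eq_mul, add_sub_cancel, mul_one]
  simp_rw [hfactor, prod_mul_distrib, prod_const, prod_pow]
  rw [prod_residueClass_addChar hp, one_pow, one_mul, prod_prod_one_sub_addChar_sub hp hψ]

lemma prod_prod_one_sub_addChar_mul (hψ : Function.Injective ψ) (e : ℤˣ) :
    ∏ x ∈ residueClass (ZMod p) e, ∏ y ∈ residueClass (ZMod p) (-e), (1 - ψ x * ψ y) =
      (p : R) ^ m := by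
  rw [← prod_residueClass_neg (quadraticChar_neg_one_of_card (zmod_card_eq hp)),
    ← prod_prod_one_sub_addChar_sub hp hψ e]
  simp_rw [← AddChar.map_add_eq_mul, neg_add_eq_sub]

-- The `2 * m` factors contribute `(φ ^ 2) (-t) ^ (2 * m) = φ t`, as `-4 * m = 1` in `ZMod p`.
lemma prod_addChar_neg_sub (φ : AddChar (ZMod p) R) (e : ℤˣ) (t : ZMod p) :
    ∏ x ∈ residueClass (ZMod p) e, ((φ ^ 2) (-t) - (φ ^ 2) x) =
      φ t * ∏ x ∈ residueClass (ZMod p) e, ((φ ^ 2) t - (φ ^ 2) x) := by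
  have hneg := quadraticChar_neg_one_of_card (zmod_card_eq hp)
  have hfactor (x : ZMod p) : (φ ^ 2) (-t) - (φ ^ 2) (-x) =
      (φ ^ 2) (-t) * (φ ^ 2) (-x) * (-1) * ((φ ^ 2) t - (φ ^ 2) x) := by
    have h (s : ZMod p) : (φ ^ 2) (-s) * (φ ^ 2) s = 1 := by
      rw [← AddChar.map_add_eq_mul, neg_add_cancel, AddChar.map_zero_eq_one]
    linear_combination (φ ^ 2) (-x) * h t - (φ ^ 2) (-t) * h x
  have hpow : (φ ^ 2) (-t) ^ (2 * m) = φ t := by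
    rw [AddChar.pow_apply, ← pow_mul, ← AddChar.map_nsmul_eq_pow]
    have hm : ((4 * m + 1 : ℕ) : ZMod p) = 0 := by rw [← hp, ZMod.natCast_self]
    push_cast at hm
    congr 1
    rw [nsmul_eq_mul]
    push_cast
    linear_combination -t * hm
  rw [← prod_residueClass_neg hneg]
  simp_rw [hfactor, prod_mul_distrib, prod_const]
  rw [prod_residueClass_neg hneg e, prod_residueClass_addChar hp,
    card_residueClass_eq (zmod_card_eq hp), hpow, (even_two_mul m).neg_one_pow, mul_one, mul_one]

end

end AdditiveCharacter

/-! ### Vandermonde determinants at the roots of unity -/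

section Vandermonde

variable {R : Type*} [CommRing R] {n : ℕ}

lemma det_vandermonde_cons_one (hn : Even n) (x : Fin n → R) :
    (vandermonde (Fin.cons 1 x : Fin (n + 1) → R)).det =
      (∏ i, (1 - x i)) * (vandermonde x).det := by
  have hneg : ∏ i, (x i - 1) = ∏ i, (1 - x i) := by
    simp_rw [← neg_sub 1 (x _)]
    rw [prod_neg, card_univ, Fintype.card_fin, hn.neg_one_pow, one_mul]
  rw [det_vandermonde, det_vandermonde, Fin.prod_univ_succ, Fin.prod_Ioi_zero]
  simp only [Fin.prod_Ioi_succ, Fin.cons_succ, Fin.cons_zero, hneg]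

lemma det_vandermonde_sq (x : Fin n → R) :
    (vandermonde x).det ^ 2 =
      (∏ i : Fin n, ∏ _j ∈ Ioi i, (-1)) * ∏ i, ∏ j ∈ {i}ᶜ, (x i - x j) := by
  rw [← prod_prod_Ioi_mul_eq_prod_prod_off_diag fun i j => x j - x i, det_vandermonde]
  simp_rw [← prod_pow, ← prod_mul_distrib]
  exact prod_congr rfl fun i _ => prod_congr rfl fun j _ => by ring

lemma det_vandermonde_pow_two (x : Fin n → R) :
    (vandermonde fun i => x i ^ 2).det =
      (vandermonde x).det * ∏ i, ∏ j ∈ Ioi i, (x j + x i) := by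
  simp_rw [det_vandermonde, ← prod_mul_distrib]
  exact prod_congr rfl fun i _ => prod_congr rfl fun j _ => by ring

lemma sum_card_Ioi_mul_two (n : ℕ) : (∑ i : Fin n, #(Ioi i)) * 2 = n * (n - 1) := by
  rw [← sum_range_id_mul_two, ← sum_range_reflect, sum_range fun j => n - 1 - j]
  simp only [Fin.card_Ioi]

end Vandermonde

section Enumeration

variable {ι α M : Type*} [Fintype ι] [CommMonoid M] {s : Finset α}

lemma prod_equiv_coe (c : ι ≃ s) (f : α → M) : ∏ i, f (c i) = ∏ x ∈ s, f x := by
  rw [Equiv.prod_comp c fun x : s => f x, prod_coe_sort]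

lemma prod_compl_equiv_coe [DecidableEq ι] [DecidableEq α] (c : ι ≃ s) (f : α → M) (i : ι) :
    ∏ j ∈ {i}ᶜ, f (c j) = ∏ x ∈ s.erase (c i), f x :=
  prod_bij (fun j _ => (c j : α)) (fun j hj => by simpa [Subtype.coe_inj] using hj)
    (fun j _ k _ h => c.injective (Subtype.coe_injective h))
    (fun x hx => ⟨c.symm ⟨x, mem_of_mem_erase hx⟩, by
      simpa [Equiv.symm_apply_eq, Subtype.ext_iff] using ne_of_mem_erase hx, by simp⟩)
    fun _ _ => rfl

end Enumeration

lemma intCast_eval_one_of_aeval_eq {p : ℕ} [Fact p.Prime] {R : Type*} [Field R] [CharZero R]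
    {ζ : R} (hζ : IsPrimitiveRoot ζ p) {Q : ℤ[X]} {s : ℤ} (h : aeval ζ Q = s) :
    ((Q.eval 1 : ℤ) : ZMod p) = s := by
  have hp : 0 < p := (Fact.out : p.Prime).pos
  have hroot : aeval ζ (Q - C s) = 0 := by simp [h]
  have hdvd : cyclotomic p ℤ ∣ Q - C s := by
    rw [cyclotomic_eq_minpoly hζ hp]
    exact minpoly.isIntegrallyClosed_dvd (hζ.isIntegral hp) hroot
  have hdvd_eval : (p : ℤ) ∣ Q.eval 1 - s := by
    simpa [eval_one_cyclotomic_prime] using eval_dvd (x := 1) hdvd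
  exact sub_eq_zero.1 (by exact_mod_cast (ZMod.intCast_zmod_eq_zero_iff_dvd _ p).2 hdvd_eval)

section ResidueVandermonde

variable {p m : ℕ} [Fact p.Prime] {R : Type*} [Field R] {ψ φ : AddChar (ZMod p) R}

lemma natCast_ne_zero_of_injective (hψ : Function.Injective ψ) : (p : R) ≠ 0 := by
  rw [← cyclotomicProd_mul_cyclotomicProd_neg hψ 1]
  exact mul_ne_zero (cyclotomicProd_ne_zero hψ 1) (cyclotomicProd_ne_zero hψ (-1))

lemma quadraticChar_two_eq_pow (hp : p = 4 * m + 1) :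
    ((quadraticChar (ZMod p) 2 : ℤ) : ZMod p) = 2 ^ (2 * m) := by
  rw [quadraticChar_eq_pow_of_char_ne_two' (ringChar_ne_two_of_card (zmod_card_eq hp)),
    zmod_card_eq hp]
  congr 1
  omega

lemma det_vandermonde_addChar_ne_zero (hψ : Function.Injective ψ) {n : ℕ} {s : Finset (ZMod p)}
    (c : Fin n ≃ s) : (vandermonde fun i => ψ (c i)).det ≠ 0 :=
  det_vandermonde_ne_zero_iff.2 (hψ.comp (Subtype.coe_injective.comp c.injective))

variable (hp : p = 4 * m + 1)
include hp

lemma prod_prod_erase_residueClass (hψ : Function.Injective ψ) (e : ℤˣ) :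
    (∏ x ∈ residueClass (ZMod p) e, ∏ y ∈ (residueClass (ZMod p) e).erase x, (ψ x - ψ y)) *
      cyclotomicProd ψ e * p ^ m = p ^ (2 * m) := by
  have hneg : ∏ x ∈ residueClass (ZMod p) e, (ψ x - 1) = cyclotomicProd ψ e := by
    simp_rw [← neg_sub 1 (ψ _)]
    rw [prod_neg, card_residueClass_eq (zmod_card_eq hp), (even_two_mul m).neg_one_pow, one_mul,
      cyclotomicProd]
  have hprod := prod_congr rfl fun x (hx : x ∈ residueClass (ZMod p) e) =>
    prod_erase_residueClass hψ hx
  simp_rw [prod_mul_distrib] at hprod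
  rw [hneg, prod_prod_addChar_sub_addChar hp hψ, prod_residueClass_addChar hp, prod_const,
    card_residueClass_eq (zmod_card_eq hp), mul_one] at hprod
  rw [← hprod]
  ring

variable (c : Fin (2 * m) ≃ residueClass (ZMod p) 1)
  (d : Fin (2 * m) ≃ residueClass (ZMod p) (-1))

lemma sq_det_vandermonde_mul (hψ : Function.Injective ψ) :
    ((vandermonde fun i => ψ (c i)).det * (vandermonde fun i => ψ (d i)).det) ^ 2 * p =
      (p : R) ^ (2 * m) := by
  have hsign : (∏ i : Fin (2 * m), ∏ _j ∈ Ioi i, (-1 : R)) ^ 2 = 1 := by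
    simp_rw [← prod_pow]
    simp
  have hoff {e : ℤˣ} (c : Fin (2 * m) ≃ residueClass (ZMod p) e) :
      (∏ i, ∏ j ∈ {i}ᶜ, (ψ (c i) - ψ (c j))) * cyclotomicProd ψ e * p ^ m = p ^ (2 * m) := by
    rw [← prod_prod_erase_residueClass hp hψ e,
      ← prod_equiv_coe c fun x => ∏ y ∈ (residueClass (ZMod p) e).erase x, (ψ x - ψ y)]
    simp_rw [← prod_compl_equiv_coe c fun y => ψ _ - ψ y]
  apply mul_right_cancel₀ (pow_ne_zero (2 * m) (natCast_ne_zero_of_injective hψ))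
  calc _ = (∏ i : Fin (2 * m), ∏ _j ∈ Ioi i, (-1 : R)) ^ 2 *
        ((∏ i, ∏ j ∈ {i}ᶜ, (ψ (c i) - ψ (c j))) * ∏ i, ∏ j ∈ {i}ᶜ, (ψ (d i) - ψ (d j))) *
          (cyclotomicProd ψ 1 * cyclotomicProd ψ (-1)) * p ^ (2 * m) := by
        rw [mul_pow, det_vandermonde_sq, det_vandermonde_sq,
          cyclotomicProd_mul_cyclotomicProd_neg hψ 1]
        ring
    _ = ((∏ i, ∏ j ∈ {i}ᶜ, (ψ (c i) - ψ (c j))) * cyclotomicProd ψ 1 * p ^ m) *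
        ((∏ i, ∏ j ∈ {i}ᶜ, (ψ (d i) - ψ (d j))) * cyclotomicProd ψ (-1) * p ^ m) := by
        rw [hsign]
        ring
    _ = p ^ (2 * m) * p ^ (2 * m) := by rw [hoff c, hoff d]

lemma sq_prod_add_eq_one (hφ : Function.Injective φ) :
    ((∏ i, ∏ j ∈ Ioi i, (φ (c j) + φ (c i))) * ∏ i, ∏ j ∈ Ioi i, (φ (d j) + φ (d i))) ^ 2 = 1 := by
  have hp2 : p ≠ 2 := by omega
  have hsq := sq_det_vandermonde_mul hp c d (pow_two_injective hp2 hφ)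
  simp_rw [AddChar.pow_apply, det_vandermonde_pow_two] at hsq
  have hne := mul_ne_zero (pow_ne_zero 2 (mul_ne_zero (det_vandermonde_addChar_ne_zero hφ c)
    (det_vandermonde_addChar_ne_zero hφ d))) (natCast_ne_zero_of_injective hφ)
  apply mul_left_cancel₀ hne
  rw [mul_one]
  conv_rhs => rw [sq_det_vandermonde_mul hp c d hφ, ← hsq]
  ring

-- Specializes the root of unity `φ 1` to `1` modulo `p`.
lemma intCast_eq_quadraticChar_two_of_prod_add_eq [CharZero R] (hφ : Function.Injective φ) {s : ℤ}
    (hs : (∏ i, ∏ j ∈ Ioi i, (φ (c j) + φ (c i))) * ∏ i, ∏ j ∈ Ioi i, (φ (d j) + φ (d i)) =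
      (s : R)) : (s : ZMod p) = (quadraticChar (ZMod p) 2 : ℤ) := by
  let Q {e : ℤˣ} (c : Fin (2 * m) ≃ residueClass (ZMod p) e) : ℤ[X] :=
    ∏ i, ∏ j ∈ Ioi i, (X ^ (c j : ZMod p).val + X ^ (c i : ZMod p).val)
  have haeval {e : ℤˣ} (c : Fin (2 * m) ≃ residueClass (ZMod p) e) :
      aeval (φ 1) (Q c) = ∏ i, ∏ j ∈ Ioi i, (φ (c j) + φ (c i)) := by
    simp [Q, ← AddChar.map_nsmul_eq_pow]
  have heval {e : ℤˣ} (c : Fin (2 * m) ≃ residueClass (ZMod p) e) :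
      (Q c).eval 1 = 2 ^ ∑ i : Fin (2 * m), #(Ioi i) := by
    simp [Q, eval_prod, prod_pow_eq_pow_sum, one_add_one_eq_two]
  have hodd : Odd (2 * m - 1) := by
    have := (Fact.out : p.Prime).one_lt
    exact ⟨m - 1, by omega⟩
  rw [← haeval, ← haeval, ← map_mul] at hs
  rw [← intCast_eval_one_of_aeval_eq (isPrimitiveRoot_of_injective hφ) hs, eval_mul, heval, heval,
    ← pow_add, ← mul_two, sum_card_Ioi_mul_two, pow_mul, Int.cast_pow, Int.cast_pow,
    Int.cast_ofNat, ← quadraticChar_two_eq_pow hp, ← Int.cast_pow]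
  congr 1
  rcases quadraticChar_dichotomy (two_ne_zero_zmod hp) with h | h <;>
    simp [h, hodd.neg_one_pow]

lemma prod_add_eq_quadraticChar_two [CharZero R] (hφ : Function.Injective φ) :
    (∏ i, ∏ j ∈ Ioi i, (φ (c j) + φ (c i))) * ∏ i, ∏ j ∈ Ioi i, (φ (d j) + φ (d i)) =
      (quadraticChar (ZMod p) 2 : ℤ) := by
  have hne : (-1 : ZMod p) ≠ 1 :=
    Ring.neg_one_ne_one_of_char_ne_two (ringChar_ne_two_of_card (zmod_card_eq hp))
  have hmod {s : ℤ} (hs : _ = (s : R)) := intCast_eq_quadraticChar_two_of_prod_add_eq hp c d hφ hs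
  rcases sq_eq_one_iff.1 (sq_prod_add_eq_one hp c d hφ) with h | h <;>
    rcases quadraticChar_dichotomy (two_ne_zero_zmod hp) with hχ | hχ <;>
    rw [h, hχ] <;> norm_cast
  · have := hmod (s := 1) (by rw [h, Int.cast_one])
    rw [hχ] at this
    exact absurd (by exact_mod_cast this.symm) hne
  · have := hmod (s := -1) (by rw [h, Int.cast_neg, Int.cast_one])
    rw [hχ] at this
    exact absurd (by exact_mod_cast this) hne

theorem det_vandermonde_addChar_pow_two_mul [CharZero R] (hφ : Function.Injective φ) :
    ((vandermonde fun i => (φ ^ 2) (c i)).det * (vandermonde fun i => (φ ^ 2) (d i)).det) *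
        ((vandermonde fun i => φ (c i)).det * (vandermonde fun i => φ (d i)).det) * p =
      (quadraticChar (ZMod p) 2 : ℤ) * (p : R) ^ (2 * m) := by
  simp_rw [AddChar.pow_apply, det_vandermonde_pow_two]
  rw [← prod_add_eq_quadraticChar_two hp c d hφ, ← sq_det_vandermonde_mul hp c d hφ]
  ring

end ResidueVandermonde

/-! ### The Gauss sum factorization of the Legendre symbol matrix -/

/-- The Legendre symbol modulo `p` as a Dirichlet character with values in `R`. -/
noncomputable def legendreChar (p : ℕ) [Fact p.Prime] (R : Type*) [CommRing R] :
    DirichletCharacter R p :=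
  (quadraticChar (ZMod p)).ringHomComp (Int.castRingHom R)

/-- The `n × n` integer matrix with entries the Legendre symbols `(j - i / p)`. -/
def evilMatrix (p : ℕ) [Fact p.Prime] (n : ℕ) : Matrix (Fin n) (Fin n) ℤ :=
  Matrix.of fun i j => legendreSym p ((j : ℤ) - (i : ℤ))

section GaussSum

variable {p m : ℕ} [Fact p.Prime] {R : Type*}

lemma legendreChar_apply [CommRing R] (t : ZMod p) :
    legendreChar p R t = (quadraticChar (ZMod p) t : ℤ) := rfl

lemma legendreChar_isQuadratic [CommRing R] : (legendreChar p R).IsQuadratic :=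
  (quadraticChar_isQuadratic _).comp _

variable [Field R] [CharZero R] (hp : p = 4 * m + 1) {ψ : AddChar (ZMod p) R}
include hp

lemma legendreChar_ne_one : legendreChar p R ≠ 1 :=
  (MulChar.ringHomComp_ne_one_iff (RingHom.injective_int _)).2
    (quadraticChar_ne_one (ringChar_ne_two_of_card (zmod_card_eq hp)))

lemma isPrimitive_legendreChar : (legendreChar p R).IsPrimitive :=
  ((Nat.dvd_prime Fact.out).1 (DirichletCharacter.conductor_dvd_level _)).resolve_left fun h =>
    legendreChar_ne_one hp ((DirichletCharacter.eq_one_iff_conductor_eq_one).2 h)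

lemma gaussSum_legendreChar_mulShift (a : ZMod p) :
    gaussSum (legendreChar p R) (ψ.mulShift a) =
      legendreChar p R a * gaussSum (legendreChar p R) ψ := by
  rw [gaussSum_mulShift_of_isPrimitive ψ (isPrimitive_legendreChar hp),
    legendreChar_isQuadratic.inv]

lemma gaussSum_legendreChar_sq (hψ : Function.Injective ψ) :
    gaussSum (legendreChar p R) ψ ^ 2 = p := by
  rw [gaussSum_sq (χ := legendreChar p R) (legendreChar_ne_one hp) legendreChar_isQuadratic
    (isPrimitive_of_injective hψ),
    legendreChar_apply, quadraticChar_neg_one_of_card (zmod_card_eq hp), ZMod.card, Int.cast_one,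
    one_mul]

lemma gaussSum_legendreChar_pow (hψ : Function.Injective ψ) :
    gaussSum (legendreChar p R) ψ ^ (2 * m + 1) = p ^ m * gaussSum (legendreChar p R) ψ := by
  rw [pow_succ, pow_mul, gaussSum_legendreChar_sq hp hψ]

end GaussSum

section LegendreKernel

variable {p m : ℕ} [Fact p.Prime] {R : Type*} [Field R] {ψ φ : AddChar (ZMod p) R}

/-- The bilinear kernel that represents the Legendre symbol, up to a Gauss sum, in the Lagrange
bases at the `ψ x` with `x` zero or a square, respectively zero or a nonsquare. -/
noncomputable def legendreKernel (ψ : AddChar (ZMod p) R) (x y : ZMod p) : R :=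
  ∑ t, legendreChar p R t *
    ((Lagrange.basis (insert 0 (residueClass (ZMod p) 1)) ψ x).eval (ψ (-t)) *
      (Lagrange.basis (insert 0 (residueClass (ZMod p) (-1))) ψ y).eval (ψ t))

lemma sum_pow_mul_eval_basis {ι : Type*} [DecidableEq ι] {s : Finset ι} {v : ι → R}
    (hv : Set.InjOn v s) {k : ℕ} (hk : k < #s) (z : R) :
    ∑ i ∈ s, v i ^ k * (Lagrange.basis s v i).eval z = z ^ k := by
  have hdeg : (X ^ k : R[X]).degree < #s := by
    rw [degree_X_pow]
    exact_mod_cast hk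
  have h := congrArg (eval z) (Lagrange.eq_interpolate hv hdeg)
  simpa [Lagrange.interpolate_apply, eval_finsetSum] using h.symm

lemma sum_eval_basis_mul {ι : Type*} [DecidableEq ι] {s : Finset ι} {v : ι → R}
    (hv : Set.InjOn v s) {x : ι} (hx : x ∈ s) (f : ι → R) :
    ∑ t ∈ s, (Lagrange.basis s v x).eval (v t) * f t = f x := by
  rw [sum_eq_single_of_mem x hx fun t ht htx => by
    rw [Lagrange.eval_basis_of_ne htx.symm ht, zero_mul], Lagrange.eval_basis_self hv hx, one_mul]

lemma sum_insert_zero_residueClass_neg {M : Type*} [AddCommMonoid M]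
    (hneg : quadraticChar (ZMod p) (-1) = 1) (e : ℤˣ) (f : ZMod p → M) :
    ∑ t ∈ insert 0 (residueClass (ZMod p) e), f (-t) =
      ∑ t ∈ insert 0 (residueClass (ZMod p) e), f t := by
  rw [sum_insert (zero_notMem_residueClass e), sum_insert (zero_notMem_residueClass e), neg_zero,
    sum_residueClass_neg hneg]

lemma sum_legendreChar_mul (f : ZMod p → R) :
    ∑ t, legendreChar p R t * f t =
      ∑ t ∈ insert 0 (residueClass (ZMod p) 1), f t -
        ∑ t ∈ insert 0 (residueClass (ZMod p) (-1)), f t := by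
  have hvalue (e : ℤˣ) : ∑ t ∈ residueClass (ZMod p) e, legendreChar p R t * f t =
      (e : ℤ) * ∑ t ∈ residueClass (ZMod p) e, f t := by
    rw [mul_sum]
    exact sum_congr rfl fun t ht => by rw [legendreChar_apply, mem_residueClass.1 ht]
  rw [sum_univ_eq_sum_residueClass 1, hvalue, hvalue, MulChar.map_zero,
    sum_insert (zero_notMem_residueClass 1), sum_insert (zero_notMem_residueClass (-1))]
  push_cast
  ring

variable (hp : p = 4 * m + 1)
include hp

lemma legendreKernel_eq_sub (hψ : Function.Injective ψ) {x y : ZMod p}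
    (hx : x ∈ insert 0 (residueClass (ZMod p) 1))
    (hy : y ∈ insert 0 (residueClass (ZMod p) (-1))) :
    legendreKernel ψ x y =
      (Lagrange.basis (insert 0 (residueClass (ZMod p) (-1))) ψ y).eval (ψ (-x)) -
        (Lagrange.basis (insert 0 (residueClass (ZMod p) 1)) ψ x).eval (ψ (-y)) := by
  have hneg := quadraticChar_neg_one_of_card (zmod_card_eq hp)
  rw [legendreKernel, sum_legendreChar_mul, ← sum_insert_zero_residueClass_neg hneg 1]
  simp_rw [neg_neg]
  rw [sum_eval_basis_mul hψ.injOn hx fun t => (Lagrange.basis _ ψ y).eval (ψ (-t))]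
  simp_rw [mul_comm ((Lagrange.basis _ ψ x).eval _)]
  rw [sum_eval_basis_mul hψ.injOn hy fun t => (Lagrange.basis _ ψ x).eval (ψ (-t))]

lemma card_insert_zero_residueClass (e : ℤˣ) :
    #(insert 0 (residueClass (ZMod p) e)) = 2 * m + 1 := by
  rw [card_insert_of_notMem (zero_notMem_residueClass e),
    card_residueClass_eq (zmod_card_eq hp)]

lemma sum_sum_pow_mul_legendreKernel [CharZero R] (hψ : Function.Injective ψ)
    (i j : Fin (2 * m + 1)) :
    ∑ x ∈ insert 0 (residueClass (ZMod p) 1), ∑ y ∈ insert 0 (residueClass (ZMod p) (-1)),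
        ψ x ^ (i : ℕ) * legendreKernel ψ x y * ψ y ^ (j : ℕ) =
      gaussSum (legendreChar p R) ψ * (evilMatrix p (2 * m + 1) i j : ℤ) := by
  have hinterp {e : ℤˣ} (k : Fin (2 * m + 1)) := sum_pow_mul_eval_basis
    (s := insert 0 (residueClass (ZMod p) e)) hψ.injOn
    (k.isLt.trans_eq (card_insert_zero_residueClass hp e).symm)
  calc _ = ∑ t, legendreChar p R t *
        ((∑ x ∈ insert 0 (residueClass (ZMod p) 1),
          ψ x ^ (i : ℕ) * (Lagrange.basis (insert 0 (residueClass (ZMod p) 1)) ψ x).eval (ψ (-t))) *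
        (∑ y ∈ insert 0 (residueClass (ZMod p) (-1)),
          ψ y ^ (j : ℕ) *
            (Lagrange.basis (insert 0 (residueClass (ZMod p) (-1))) ψ y).eval (ψ t))) := by
        simp_rw [legendreKernel, sum_mul_sum, mul_sum, sum_mul]
        rw [sum_congr rfl fun x _ => sum_comm, sum_comm]
        exact sum_congr rfl fun t _ => sum_congr rfl fun x _ => sum_congr rfl fun y _ => by ring
    _ = gaussSum (legendreChar p R) (ψ.mulShift ((j : ZMod p) - (i : ZMod p))) := by
        refine sum_congr rfl fun t _ => ?_
        rw [hinterp, hinterp, ← AddChar.map_nsmul_eq_pow, ← AddChar.map_nsmul_eq_pow,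
          ← AddChar.map_add_eq_mul, AddChar.mulShift_apply, nsmul_eq_mul, nsmul_eq_mul]
        ring_nf
    _ = _ := by
        rw [gaussSum_legendreChar_mulShift hp, mul_comm, legendreChar_apply]
        simp [evilMatrix, legendreSym]

end LegendreKernel

section NodeFactor

variable {p m : ℕ} [Fact p.Prime] {R : Type*} [Field R] {φ : AddChar (ZMod p) R}

/-- The factor of row `x` (for `e = 1`) or of column `x` (for `e = -1`) that separates
`legendreKernel (φ ^ 2)` from the Cauchy-like matrix `(φ y - φ x) / (1 - φ x * φ y)`. -/
noncomputable def nodeFactor (φ : AddChar (ZMod p) R) (e : ℤˣ) (x : ZMod p) : R :=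
  φ x * ∏ y ∈ residueClass (ZMod p) (-e), ((φ ^ 2) x - (φ ^ 2) y)

lemma nodalWeight_insert_zero_residueClass {ψ : AddChar (ZMod p) R} (hψ : Function.Injective ψ)
    {e : ℤˣ} {x : ZMod p} (hx : x ∈ insert 0 (residueClass (ZMod p) e)) :
    Lagrange.nodalWeight (insert 0 (residueClass (ZMod p) e)) ψ x =
      ψ x * (∏ y ∈ residueClass (ZMod p) (-e), (ψ x - ψ y)) / p := by
  rw [Lagrange.nodalWeight, prod_inv_distrib]
  have hp := natCast_ne_zero_of_injective hψ
  have h := prod_erase_insert_zero_residueClass hψ hx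
  rw [mul_assoc] at h
  rw [inv_eq_of_mul_eq_one_right]
  rw [mul_div_assoc', mul_comm (ψ x), h, div_self hp]

variable (hp : p = 4 * m + 1)
include hp

lemma prod_nodeFactor (hφ : Function.Injective φ) (e : ℤˣ) :
    ∏ x ∈ insert 0 (residueClass (ZMod p) e), nodeFactor φ e x =
      cyclotomicProd (φ ^ 2) (-e) * p ^ m := by
  have hp2 : p ≠ 2 := by omega
  rw [prod_insert (zero_notMem_residueClass e)]
  simp only [nodeFactor, prod_mul_distrib]
  rw [prod_residueClass_addChar hp, prod_prod_addChar_sub_addChar hp (pow_two_injective hp2 hφ),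
    AddChar.map_zero_eq_one, AddChar.map_zero_eq_one, one_mul, one_mul, cyclotomicProd]

lemma eval_basis_addChar_neg (hφ : Function.Injective φ) {e : ℤˣ} {x y : ZMod p}
    (hy : y ∈ insert 0 (residueClass (ZMod p) (-e))) (hxy : x + y ≠ 0) :
    (Lagrange.basis (insert 0 (residueClass (ZMod p) (-e))) ⇑(φ ^ 2) y).eval ((φ ^ 2) (-x)) =
      nodeFactor φ e x * nodeFactor φ (-e) y / p *
        (φ y * (1 - (φ ^ 2) x) / (1 - (φ ^ 2) (x + y))) := by
  have hp2 : p ≠ 2 := by omega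
  have hψ := pow_two_injective hp2 hφ
  have hnode : (φ ^ 2) (-x) ≠ (φ ^ 2) y := fun h => hxy (by rw [← hψ h, add_neg_cancel])
  have hinv : (φ ^ 2) (-x) * (φ ^ 2) x = 1 := by
    rw [← AddChar.map_add_eq_mul, neg_add_cancel, AddChar.map_zero_eq_one]
  have hquot : ((φ ^ 2) (-x) - 1) * ((φ ^ 2) (-x) - (φ ^ 2) y)⁻¹ =
      (1 - (φ ^ 2) x) / (1 - (φ ^ 2) (x + y)) := by
    rw [← div_eq_mul_inv, div_eq_div_iff (sub_ne_zero.2 hnode)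
      (one_sub_ne_zero_of_injective hψ hxy), AddChar.map_add_eq_mul]
    linear_combination (1 - (φ ^ 2) y) * hinv
  rw [Lagrange.eval_basis_not_at_node hy hnode, Lagrange.eval_nodal,
    prod_insert (zero_notMem_residueClass (-e)), AddChar.map_zero_eq_one,
    nodalWeight_insert_zero_residueClass hψ hy, prod_addChar_neg_sub hp]
  calc _ = nodeFactor φ e x * nodeFactor φ (-e) y / p *
        (φ y * (((φ ^ 2) (-x) - 1) * ((φ ^ 2) (-x) - (φ ^ 2) y)⁻¹)) := by
        rw [nodeFactor, nodeFactor, AddChar.pow_apply φ 2 y]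
        ring
    _ = _ := by rw [hquot, mul_div_assoc (φ y)]

lemma eq_zero_of_mem_insert_zero_of_add_eq_zero {x y : ZMod p}
    (hx : x ∈ insert 0 (residueClass (ZMod p) 1))
    (hy : y ∈ insert 0 (residueClass (ZMod p) (-1))) (hxy : x + y = 0) : x = 0 := by
  by_contra hx0
  obtain rfl := eq_neg_of_add_eq_zero_right hxy
  have hneg := neg_mem_residueClass (quadraticChar_neg_one_of_card (zmod_card_eq hp))
    (mem_of_mem_insert_of_ne hx hx0)
  exact disjoint_left.1 (disjoint_residueClass_neg 1) hneg
    (mem_of_mem_insert_of_ne hy (neg_ne_zero.2 hx0))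

theorem legendreKernel_eq_nodeFactor_mul (hφ : Function.Injective φ) {x y : ZMod p}
    (hx : x ∈ insert 0 (residueClass (ZMod p) 1))
    (hy : y ∈ insert 0 (residueClass (ZMod p) (-1))) :
    legendreKernel (φ ^ 2) x y =
      nodeFactor φ 1 x * nodeFactor φ (-1) y / p * ((φ y - φ x) / (1 - φ x * φ y)) := by
  have hp2 : p ≠ 2 := by omega
  have hψ := pow_two_injective hp2 hφ
  rw [legendreKernel_eq_sub hp hψ hx hy]
  by_cases hxy : x + y = 0
  · obtain rfl := eq_zero_of_mem_insert_zero_of_add_eq_zero hp hx hy hxy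
    obtain rfl : y = 0 := by rwa [zero_add] at hxy
    rw [neg_zero, Lagrange.eval_basis_self hψ.injOn hx, Lagrange.eval_basis_self hψ.injOn hy,
      sub_self, sub_self, zero_div, mul_zero]
  · have hleft := eval_basis_addChar_neg hp hφ hy hxy
    have hright := eval_basis_addChar_neg hp hφ (e := -1) (x := y) (y := x) (by rwa [neg_neg])
      (by rwa [add_comm])
    have hfactor : 1 - (φ ^ 2) (x + y) = (1 - φ x * φ y) * (1 + φ x * φ y) := by
      rw [AddChar.pow_apply, AddChar.map_add_eq_mul]
      ring
    have hne := one_sub_ne_zero_of_injective hψ hxy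
    rw [neg_neg, add_comm] at hright
    rw [hfactor] at hleft hright hne
    have hquot : φ y * (1 - φ x ^ 2) / ((1 - φ x * φ y) * (1 + φ x * φ y)) -
        φ x * (1 - φ y ^ 2) / ((1 - φ x * φ y) * (1 + φ x * φ y)) =
          (φ y - φ x) / (1 - φ x * φ y) := by
      rw [← sub_div, div_eq_div_iff hne (mul_ne_zero_iff.1 hne).1]
      ring
    rw [hleft, hright, AddChar.pow_apply, AddChar.pow_apply, ← hquot]
    ring

end NodeFactor

/-! ### The determinant in terms of cyclotomic products -/

lemma cauchyDifference_cons_one {R : Type*} [Field R] {n : ℕ} {u v : Fin n → R}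
    (hu : ∀ i, u i ≠ 1) (hv : ∀ j, v j ≠ 1) :
    cauchyDifference (Fin.cons 1 u : Fin (n + 1) → R) (Fin.cons 1 v : Fin (n + 1) → R) =
      bordered (cauchyDifference u v) (Fin.cons 0 fun _ => -1) := by
  ext i j
  refine Fin.cases ?_ (fun i => ?_) i <;> refine Fin.cases ?_ (fun j => ?_) j
  · simp [cauchyDifference, bordered]
  · have := sub_ne_zero.2 (hv j).symm
    simp only [cauchyDifference, bordered, of_apply, Fin.cons_zero, Fin.cons_succ, one_mul]
    rw [← neg_sub, neg_div, div_self this]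
  · have := sub_ne_zero.2 (hu i).symm
    simp only [cauchyDifference, bordered, of_apply, Fin.cons_zero, Fin.cons_succ, mul_one]
    rw [div_self this]
  · simp [cauchyDifference, bordered]

lemma pow_two_eq_mulShift {A M : Type*} [CommRing A] [CommMonoid M] (φ : AddChar A M) :
    φ ^ 2 = φ.mulShift 2 := by
  ext x
  rw [AddChar.pow_apply, AddChar.mulShift_apply, ← AddChar.map_nsmul_eq_pow, nsmul_eq_mul,
    Nat.cast_two]

section DetEvilMatrix

variable {p m : ℕ} [Fact p.Prime] {R : Type*} [Field R] {ψ φ : AddChar (ZMod p) R}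

/-- The enumeration of `insert 0 s` that starts with `0` and continues with the enumeration `c`
of `s`. -/
def consZero {n : ℕ} {s : Finset (ZMod p)} (c : Fin n ≃ s) : Fin (n + 1) → ZMod p :=
  Fin.cons 0 fun i => c i

lemma consZero_mem {n : ℕ} {s : Finset (ZMod p)} (c : Fin n ≃ s) (i : Fin (n + 1)) :
    consZero c i ∈ insert 0 s :=
  Fin.cases (mem_insert_self 0 s) (fun i => mem_insert_of_mem (c i).2) i

lemma prod_consZero {M : Type*} [CommMonoid M] {n : ℕ} {s : Finset (ZMod p)} (h0 : 0 ∉ s)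
    (c : Fin n ≃ s) (f : ZMod p → M) : ∏ i, f (consZero c i) = ∏ x ∈ insert 0 s, f x := by
  rw [Fin.prod_univ_succ, prod_insert h0, ← prod_equiv_coe c]
  rfl

lemma sum_consZero {M : Type*} [AddCommMonoid M] {n : ℕ} {s : Finset (ZMod p)} (h0 : 0 ∉ s)
    (c : Fin n ≃ s) (f : ZMod p → M) : ∑ i, f (consZero c i) = ∑ x ∈ insert 0 s, f x :=
  prod_consZero (M := Multiplicative M) h0 c f

lemma addChar_consZero {n : ℕ} {s : Finset (ZMod p)} (c : Fin n ≃ s) :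
    (fun i => ψ (consZero c i)) = Fin.cons 1 fun i => ψ (c i) := by
  ext i
  refine Fin.cases ?_ (fun i => ?_) i <;> simp [consZero]

lemma det_vandermonde_consZero {e : ℤˣ} (c : Fin (2 * m) ≃ residueClass (ZMod p) e) :
    (vandermonde fun i => ψ (consZero c i)).det =
      cyclotomicProd ψ e * (vandermonde fun i => ψ (c i)).det := by
  rw [addChar_consZero, det_vandermonde_cons_one (even_two_mul m), cyclotomicProd,
    ← prod_equiv_coe c]

lemma prod_one_add_addChar {s : ℤˣ} (hs : quadraticChar (ZMod p) 2 = s)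
    (hφ : Function.Injective φ) (e : ℤˣ) :
    ∏ x ∈ residueClass (ZMod p) e, (1 + φ x) = cyclotomicProd φ (s * e) / cyclotomicProd φ e := by
  rw [eq_div_iff (cyclotomicProd_ne_zero hφ e), ← cyclotomicProd_mulShift hs e,
    ← pow_two_eq_mulShift, cyclotomicProd, cyclotomicProd, ← prod_mul_distrib]
  exact prod_congr rfl fun x _ => by rw [AddChar.pow_apply]; ring

variable (hp : p = 4 * m + 1) (c : Fin (2 * m) ≃ residueClass (ZMod p) 1)
  (d : Fin (2 * m) ≃ residueClass (ZMod p) (-1))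
include hp

lemma smul_evilMatrix [CharZero R] (hψ : Function.Injective ψ) :
    gaussSum (legendreChar p R) ψ • (evilMatrix p (2 * m + 1)).map (Int.castRingHom R) =
      (vandermonde fun i => ψ (consZero c i))ᵀ *
        (Matrix.of fun i j => legendreKernel ψ (consZero c i) (consZero d j)) *
        vandermonde fun i => ψ (consZero d i) := by
  ext i j
  simp only [Matrix.smul_apply, map_apply, mul_apply, transpose_apply, vandermonde_apply, of_apply,
    smul_eq_mul, sum_mul, eq_intCast]
  rw [← sum_sum_pow_mul_legendreKernel hp hψ, sum_comm,
    ← sum_consZero (zero_notMem_residueClass (-1)) d]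
  exact sum_congr rfl fun k _ => (sum_consZero (zero_notMem_residueClass 1) c fun x =>
    ψ x ^ (i : ℕ) * legendreKernel ψ x (consZero d k) * ψ (consZero d k) ^ (j : ℕ)).symm

lemma det_legendreKernel (hφ : Function.Injective φ) :
    (Matrix.of fun i j => legendreKernel (φ ^ 2) (consZero c i) (consZero d j)).det =
      (cauchyDifference (fun i => φ (consZero c i)) fun j => φ (consZero d j)).det := by
  have hp2 : p ≠ 2 := by omega
  have hp0 := natCast_ne_zero_of_injective hφ
  have hfactor : (Matrix.of fun i j => legendreKernel (φ ^ 2) (consZero c i) (consZero d j)) =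
      Matrix.of fun i j => nodeFactor φ 1 (consZero c i) * (Matrix.of fun i j =>
        nodeFactor φ (-1) (consZero d j) / p *
          cauchyDifference (fun i => φ (consZero c i)) (fun j => φ (consZero d j)) i j) i j := by
    ext i j
    simp only [of_apply, cauchyDifference]
    rw [legendreKernel_eq_nodeFactor_mul hp hφ (consZero_mem c i) (consZero_mem d j)]
    ring
  rw [hfactor, det_mul_column, det_mul_row, prod_div_distrib, prod_const, card_univ,
    Fintype.card_fin, prod_consZero (zero_notMem_residueClass 1),
    prod_consZero (zero_notMem_residueClass (-1)), prod_nodeFactor hp hφ, prod_nodeFactor hp hφ,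
    neg_neg, ← mul_assoc]
  have hone := cyclotomicProd_mul_cyclotomicProd_neg (pow_two_injective hp2 hφ) 1
  have hscale : cyclotomicProd (φ ^ 2) (-1) * p ^ m *
      (cyclotomicProd (φ ^ 2) 1 * p ^ m / p ^ (2 * m + 1)) = (1 : R) := by
    rw [mul_div_assoc', div_eq_one_iff_eq (pow_ne_zero _ hp0)]
    linear_combination (p : R) ^ (2 * m) * hone
  rw [hscale, one_mul]

lemma two_mul_det_cauchyDifference_consZero (hφ : Function.Injective φ) :
    2 * (cauchyDifference (fun i => φ (consZero c i)) fun j => φ (consZero d j)).det * p ^ m =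
      (vandermonde fun i => φ (c i)).det * (vandermonde fun i => φ (d i)).det *
        (cyclotomicProd φ 1 * (∏ x ∈ residueClass (ZMod p) (-1), (1 + φ x)) -
          (∏ x ∈ residueClass (ZMod p) 1, (1 + φ x)) * cyclotomicProd φ (-1)) := by
  have hne_one {e : ℤˣ} (x : residueClass (ZMod p) e) : φ x ≠ 1 := fun h =>
    ne_zero_of_mem_residueClass x.2 (hφ (h.trans (AddChar.map_zero_eq_one φ).symm))
  have hden (i j) : 1 - φ (c i) * φ (d j) ≠ 0 := by
    rw [← AddChar.map_add_eq_mul]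
    refine one_sub_ne_zero_of_injective hφ fun h => ne_zero_of_mem_residueClass (c i).2 ?_
    exact eq_zero_of_mem_insert_zero_of_add_eq_zero hp (mem_insert_of_mem (c i).2)
      (mem_insert_of_mem (d j).2) h
  have hprod : ∏ i, ∏ j, (1 - φ (c i) * φ (d j)) = (p : R) ^ m := by
    rw [← prod_prod_one_sub_addChar_mul hp hφ 1,
      ← prod_equiv_coe c fun x => ∏ y ∈ residueClass (ZMod p) (-1), (1 - φ x * φ y)]
    exact prod_congr rfl fun i _ => prod_equiv_coe d fun y => 1 - φ (c i) * φ y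
  have hmain := two_mul_det_bordered_cauchyDifference (even_two_mul m)
    (hφ.comp (Subtype.coe_injective.comp d.injective)) (fun j => (φ.val_isUnit (d j)).ne_zero) hden
  rw [addChar_consZero, addChar_consZero, cauchyDifference_cons_one (fun i => hne_one (c i))
    fun j => hne_one (d j), ← hprod, cyclotomicProd, cyclotomicProd, ← prod_equiv_coe c,
    ← prod_equiv_coe c, ← prod_equiv_coe d, ← prod_equiv_coe d]
  exact hmain

theorem two_mul_gaussSum_pow_two_mul_det_evilMatrix [CharZero R] (hφ : Function.Injective φ) :
    2 * gaussSum (legendreChar p R) (φ ^ 2) * ((evilMatrix p (2 * m + 1)).det : R) =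
      (quadraticChar (ZMod p) 2 : ℤ) *
        (cyclotomicProd φ 1 * (∏ x ∈ residueClass (ZMod p) (-1), (1 + φ x)) -
          (∏ x ∈ residueClass (ZMod p) 1, (1 + φ x)) * cyclotomicProd φ (-1)) := by
  let c := ((residueClass (ZMod p) 1).equivFinOfCardEq
    (card_residueClass_eq (zmod_card_eq hp) 1)).symm
  let d := ((residueClass (ZMod p) (-1)).equivFinOfCardEq
    (card_residueClass_eq (zmod_card_eq hp) (-1))).symm
  have hp2 : p ≠ 2 := by omega
  have hψ := pow_two_injective hp2 hφ
  have hp0 := natCast_ne_zero_of_injective hφ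
  have hdet := congrArg det (smul_evilMatrix hp c d hψ)
  rw [det_smul, Fintype.card_fin, gaussSum_legendreChar_pow hp hψ, det_mul, det_mul, det_transpose,
    det_vandermonde_consZero, det_vandermonde_consZero, det_legendreKernel hp c d hφ,
    ← RingHom.mapMatrix_apply, ← RingHom.map_det, eq_intCast] at hdet
  have hcauchy := two_mul_det_cauchyDifference_consZero hp c d hφ
  have hvandermonde := det_vandermonde_addChar_pow_two_mul hp c d hφ
  have hnorm := cyclotomicProd_mul_cyclotomicProd_neg hψ 1
  set Δ := (cauchyDifference (fun i => φ (consZero c i)) fun j => φ (consZero d j)).det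
  set Vc := (vandermonde fun i => (φ ^ 2) (c i)).det
  set Vd := (vandermonde fun i => (φ ^ 2) (d i)).det
  set D := cyclotomicProd φ 1 * (∏ x ∈ residueClass (ZMod p) (-1), (1 + φ x)) -
    (∏ x ∈ residueClass (ZMod p) 1, (1 + φ x)) * cyclotomicProd φ (-1)
  apply mul_left_cancel₀ (pow_ne_zero (2 * m) hp0)
  linear_combination 2 * (p : R) ^ m * hdet + 2 * (p : R) ^ m * Vc * Vd * Δ * hnorm +
    Vc * Vd * p * hcauchy + D * hvandermonde

theorem two_mul_gaussSum_mul_det_evilMatrix [CharZero R] (hφ : Function.Injective φ) {s : ℤˣ}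
    (hs : quadraticChar (ZMod p) 2 = s) :
    2 * gaussSum (legendreChar p R) φ * ((evilMatrix p (2 * m + 1)).det : R) =
      cyclotomicProd φ 1 * cyclotomicProd φ (-s) / cyclotomicProd φ (-1) -
        cyclotomicProd φ (-1) * cyclotomicProd φ s / cyclotomicProd φ 1 := by
  have h := two_mul_gaussSum_pow_two_mul_det_evilMatrix hp hφ
  rw [pow_two_eq_mulShift, gaussSum_legendreChar_mulShift hp, legendreChar_apply,
    prod_one_add_addChar hs hφ, prod_one_add_addChar hs hφ, hs, mul_one, mul_neg_one] at h
  have hs0 : ((s : ℤ) : R) ≠ 0 := Int.cast_ne_zero.2 s.ne_zero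
  apply mul_left_cancel₀ hs0
  linear_combination h

end DetEvilMatrix

/-! ### Dirichlet series with bounded partial sums -/

section AbelSummation

open Filter Topology MeasureTheory

variable {f : ℕ → ℂ} {B : ℝ}

/-- The integral `∫₁^∞ A(t) t ^ (-s - 1) dt` with `A(t) = ∑_{k ≤ t} f k`. By partial summation `s`
times it is the Dirichlet series of `f`, and for bounded `A` it converges on `0 < re s`. -/
noncomputable def abelIntegral (f : ℕ → ℂ) (s : ℂ) : ℂ :=
  ∫ t in Set.Ioi (1 : ℝ), (∑ k ∈ Icc 0 ⌊t⌋₊, f k) * (t : ℂ) ^ (-(s + 1))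

lemma sum_Icc_one_eq_sum_Icc_zero (h0 : f 0 = 0) (n : ℕ) :
    ∑ k ∈ Icc 1 n, f k = ∑ k ∈ Icc 0 n, f k := by
  rw [← insert_Icc_add_one_left_eq_Icc (Nat.zero_le n), sum_insert (by simp), h0, zero_add,
    zero_add]

lemma norm_le_two_mul_of_norm_sum_le (hB : ∀ n, ‖∑ k ∈ Icc 0 n, f k‖ ≤ B) {n : ℕ} (hn : n ≠ 0) :
    ‖f n‖ ≤ 2 * B := by
  obtain ⟨n, rfl⟩ := Nat.exists_eq_succ_of_ne_zero hn
  have h := sum_Icc_succ_top (Nat.zero_le (n + 1)) f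
  calc ‖f (n + 1)‖ = ‖∑ k ∈ Icc 0 (n + 1), f k - ∑ k ∈ Icc 0 n, f k‖ := by
        rw [h, add_sub_cancel_left]
    _ ≤ B + B := (norm_sub_le _ _).trans (add_le_add (hB _) (hB _))
    _ = 2 * B := (two_mul B).symm

lemma LSeries_eq_mul_abelIntegral (h0 : f 0 = 0) (hB : ∀ n, ‖∑ k ∈ Icc 0 n, f k‖ ≤ B) {s : ℂ}
    (hs : 1 < s.re) : LSeries f s = s * abelIntegral f s := by
  have hsum : LSeriesSummable f s := LSeriesSummable_of_bounded_of_one_lt_re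
    (fun n hn => norm_le_two_mul_of_norm_sum_le hB hn) hs
  have hO : (fun n => ∑ k ∈ Icc 1 n, f k) =O[atTop] fun n : ℕ => (n : ℝ) ^ (0 : ℝ) :=
    .of_bound B (.of_forall fun n => by
      rw [sum_Icc_one_eq_sum_Icc_zero h0, Real.rpow_zero, norm_one, mul_one]
      exact hB n)
  rw [LSeries_eq_mul_integral f le_rfl (zero_lt_one.trans hs) hsum hO, abelIntegral]
  simp_rw [sum_Icc_one_eq_sum_Icc_zero h0]

lemma tendsto_abelIntegral (hB : ∀ n, ‖∑ k ∈ Icc 0 n, f k‖ ≤ B) :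
    Tendsto (fun s : ℝ => abelIntegral f s) (𝓝[>] 1) (𝓝 (abelIntegral f 1)) := by
  have hB0 : 0 ≤ B := (norm_nonneg _).trans (hB 0)
  have hmeas : Measurable fun t : ℝ => ∑ k ∈ Icc 0 ⌊t⌋₊, f k :=
    (measurable_from_nat (f := fun n => ∑ k ∈ Icc 0 n, f k)).comp Nat.measurable_floor
  refine tendsto_integral_filter_of_dominated_convergence (fun t : ℝ => B * t ^ (-2 : ℝ)) ?_ ?_
    ((integrableOn_Ioi_rpow_of_lt (by norm_num) one_pos).const_mul B) ?_
  · exact .of_forall fun s =>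
      (hmeas.mul (Complex.measurable_ofReal.pow_const _)).aestronglyMeasurable
  · filter_upwards [self_mem_nhdsWithin] with s (hs : 1 < s)
    refine (ae_restrict_iff' measurableSet_Ioi).2 (.of_forall fun t (ht : 1 < t) => ?_)
    rw [norm_mul, Complex.norm_cpow_eq_rpow_re_of_pos (by linarith)]
    refine mul_le_mul (hB _) (Real.rpow_le_rpow_of_exponent_le ht.le ?_) (by positivity) hB0
    simp only [Complex.neg_re, Complex.add_re, Complex.ofReal_re, Complex.one_re]
    linarith
  · refine (ae_restrict_iff' measurableSet_Ioi).2 (.of_forall fun t (ht : 1 < t) => ?_)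
    have ht0 : (t : ℂ) ≠ 0 := Complex.ofReal_ne_zero.2 (by linarith)
    have hcont : Continuous fun s : ℝ => (t : ℂ) ^ (-((s : ℂ) + 1)) :=
      Continuous.const_cpow (by fun_prop) (.inl ht0)
    exact ((hcont.tendsto' 1 _ (by simp)).mono_left nhdsWithin_le_nhds).const_mul _

lemma tendsto_LSeries_of_norm_sum_le (h0 : f 0 = 0) (hB : ∀ n, ‖∑ k ∈ Icc 0 n, f k‖ ≤ B) :
    Tendsto (fun s : ℝ => LSeries f s) (𝓝[>] 1) (𝓝 (abelIntegral f 1)) := by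
  have hid : Tendsto (fun s : ℝ => (s : ℂ)) (𝓝[>] 1) (𝓝 1) :=
    (Complex.continuous_ofReal.tendsto' 1 1 Complex.ofReal_one).mono_left nhdsWithin_le_nhds
  rw [← one_mul (abelIntegral f 1)]
  refine (hid.mul (tendsto_abelIntegral hB)).congr' ?_
  filter_upwards [self_mem_nhdsWithin] with s (hs : 1 < s)
  exact (LSeries_eq_mul_abelIntegral h0 hB (by rwa [Complex.ofReal_re])).symm

lemma hasDerivAt_ofReal_inv {t : ℝ} (ht : 1 ≤ t) :
    HasDerivAt (fun t : ℝ => (t : ℂ)⁻¹) (-((t : ℂ) ^ 2)⁻¹) t :=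
  (hasDerivAt_inv (Complex.ofReal_ne_zero.2 (by linarith))).comp_ofReal

lemma tendsto_sum_div_of_norm_sum_le (h0 : f 0 = 0) (hB : ∀ n, ‖∑ k ∈ Icc 0 n, f k‖ ≤ B) :
    Tendsto (fun n => ∑ k ∈ range n, f k / k) atTop (𝓝 (abelIntegral f 1)) := by
  set g : ℝ → ℂ := fun t => (t : ℂ)⁻¹
  have hderiv (t : ℝ) (ht : t ∈ Set.Ici 1) : deriv g t = -((t : ℂ) ^ 2)⁻¹ :=
    (hasDerivAt_ofReal_inv ht).deriv
  have hcont : ContinuousOn (fun t : ℝ => -((t : ℂ) ^ 2)⁻¹) (Set.Ici 1) :=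
    (ContinuousOn.inv₀ (by fun_prop) fun t (ht : 1 ≤ t) =>
      pow_ne_zero 2 (Complex.ofReal_ne_zero.2 (by linarith))).neg
  have hlim : Tendsto (fun n : ℕ => g n * ∑ k ∈ Icc 0 n, f k) atTop (𝓝 0) := by
    refine squeeze_zero_norm (a := fun n : ℕ => (n : ℝ)⁻¹ * B) (fun n => ?_)
      (by simpa using (tendsto_inv_atTop_nhds_zero_nat (𝕜 := ℝ)).mul_const B)
    rw [norm_mul, norm_inv, Complex.ofReal_natCast, Complex.norm_natCast]
    exact mul_le_mul_of_nonneg_left (hB n) (by positivity)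
  have hO : (fun t => deriv g t * ∑ k ∈ Icc 0 ⌊t⌋₊, f k) =O[atTop] fun t : ℝ => t ^ (-2 : ℝ) := by
    refine .of_bound B ?_
    filter_upwards [eventually_ge_atTop 1] with t ht
    rw [hderiv t ht, norm_mul, mul_comm, Real.rpow_neg (by linarith)]
    exact mul_le_mul (hB _) (by simp) (norm_nonneg _) ((norm_nonneg _).trans (hB 0))
  have habel := tendsto_sum_mul_atTop_nhds_one_sub_integral₀ f h0
    (fun t ht => (hasDerivAt_ofReal_inv ht).differentiableAt)
    ((hcont.congr hderiv).locallyIntegrableOn measurableSet_Ici) hlim hO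
    ⟨Set.Ioi 1, Ioi_mem_atTop 1, integrableOn_Ioi_rpow_of_lt (by norm_num) one_pos⟩
  have hintegral : abelIntegral f 1 =
      0 - ∫ t in Set.Ioi 1, deriv g t * ∑ k ∈ Icc 0 ⌊t⌋₊, f k := by
    rw [zero_sub, ← integral_neg]
    refine setIntegral_congr_fun measurableSet_Ioi fun t (ht : 1 < t) => ?_
    rw [hderiv t ht.le, one_add_one_eq_two, Complex.cpow_neg, Complex.cpow_ofNat]
    ring
  rw [hintegral, ← tendsto_add_atTop_iff_nat 1]
  refine habel.congr fun n => ?_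
  rw [Nat.range_succ_eq_Icc_zero]
  exact sum_congr rfl fun k _ => by rw [div_eq_inv_mul, Complex.ofReal_natCast]

end AbelSummation

/-! ### The value of a Dirichlet L-function at one -/

section LFunctionOne

open Filter Topology

variable {N : ℕ} [NeZero N] {χ : DirichletCharacter ℂ N}

lemma sum_range_natCast_zmod {M : Type*} [AddCommMonoid M] (f : ZMod N → M) :
    ∑ k ∈ range N, f k = ∑ t, f t :=
  sum_bij' (fun k _ => (k : ZMod N)) (fun t _ => t.val) (fun _ _ => mem_univ _)
    (fun t _ => mem_range.2 t.val_lt) (fun _ hk => ZMod.val_cast_of_lt (mem_range.1 hk))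
    (fun t _ => ZMod.natCast_zmod_val t) fun _ _ => rfl

lemma norm_sum_range_dirichletCharacter_le (hχ : χ ≠ 1) (n : ℕ) :
    ‖∑ k ∈ range n, χ k‖ ≤ N := by
  induction n using Nat.strong_induction_on with
  | _ n ih =>
    rcases lt_or_ge n N with hn | hn
    · calc ‖∑ k ∈ range n, χ k‖ ≤ ∑ _k ∈ range n, (1 : ℝ) :=
            norm_sum_le_of_le _ fun k _ => χ.norm_le_one k
        _ ≤ N := by simpa using hn.le
    · obtain ⟨k, rfl⟩ := Nat.exists_eq_add_of_le hn
      rw [sum_range_add, sum_range_natCast_zmod (χ ·), MulChar.sum_eq_zero_of_ne_one hχ, zero_add]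
      simp only [Nat.cast_add, CharP.cast_eq_zero, zero_add]
      exact ih k (Nat.lt_add_of_pos_left (NeZero.pos N))

lemma tendsto_sum_dirichletCharacter_div (hχ : χ ≠ 1) (h0 : χ 0 = 0) :
    Tendsto (fun n => ∑ k ∈ range n, χ k / k) atTop (𝓝 (χ.LFunction 1)) := by
  have hzero : χ ((0 : ℕ) : ZMod N) = 0 := by rwa [Nat.cast_zero]
  have hbound (n : ℕ) : ‖∑ k ∈ Icc 0 n, χ k‖ ≤ N := by
    rw [← Nat.range_succ_eq_Icc_zero]
    exact norm_sum_range_dirichletCharacter_le hχ _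
  have hL : Tendsto (fun s : ℝ => LSeries (χ ·) s) (𝓝[>] 1) (𝓝 (χ.LFunction 1)) := by
    have hcont : Continuous fun s : ℝ => χ.LFunction s :=
      (DirichletCharacter.differentiable_LFunction hχ).continuous.comp Complex.continuous_ofReal
    refine ((hcont.tendsto' 1 _ (by rw [Complex.ofReal_one])).mono_left
      nhdsWithin_le_nhds).congr' ?_
    filter_upwards [self_mem_nhdsWithin] with s (hs : 1 < s)
    exact χ.LFunction_eq_LSeries (by rwa [Complex.ofReal_re])
  rw [tendsto_nhds_unique hL (tendsto_LSeries_of_norm_sum_le hzero hbound)]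
  exact tendsto_sum_div_of_norm_sum_le hzero hbound

variable {ψ : AddChar (ZMod N) ℂ}

lemma hasSum_gaussSum_mul_inv_mul_pow (hχ : χ.IsPrimitive) {x : ℝ} (hx : |x| < 1) :
    HasSum (fun n : ℕ => gaussSum χ ψ * (χ⁻¹ n / n * (x : ℂ) ^ n))
      (-∑ t, χ t * Complex.log (1 - ψ t * x)) := by
  have hlog (t : ZMod N) : HasSum (fun n : ℕ => χ t * ((ψ t * x) ^ n / n))
      (-(χ t * Complex.log (1 - ψ t * x))) := by
    rw [← mul_neg]
    refine (Complex.hasSum_taylorSeries_neg_log ?_).mul_left _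
    rwa [norm_mul, AddChar.norm_apply, one_mul, Complex.norm_real, Real.norm_eq_abs]
  rw [← sum_neg_distrib]
  refine (hasSum_sum fun t _ => hlog t).congr_fun fun n => ?_
  calc gaussSum χ ψ * (χ⁻¹ n / n * (x : ℂ) ^ n)
      = gaussSum χ (ψ.mulShift n) * ((x : ℂ) ^ n / n) := by
        rw [gaussSum_mulShift_of_isPrimitive ψ hχ]
        ring
    _ = ∑ t, χ t * ((ψ t * x) ^ n / n) := by
        rw [gaussSum, sum_mul]
        refine sum_congr rfl fun t _ => ?_
        rw [AddChar.mulShift_apply, ← nsmul_eq_mul, AddChar.map_nsmul_eq_pow]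
        ring

lemma one_sub_addChar_re_pos (hψ : Function.Injective ψ) {t : ZMod N} (ht : t ≠ 0) :
    0 < (1 - ψ t).re := by
  have hle : (ψ t).re ≤ 1 := (Complex.re_le_norm _).trans_eq (AddChar.norm_apply ψ t)
  rw [Complex.sub_re, Complex.one_re, sub_pos]
  refine hle.lt_of_ne fun hre => ht (hψ ?_)
  rw [AddChar.map_zero_eq_one]
  have him : (ψ t).im = 0 := Complex.abs_re_eq_norm.1 (by rw [hre, abs_one, AddChar.norm_apply])
  exact Complex.ext hre him

theorem gaussSum_mul_LFunction_inv_one (hχ : χ.IsPrimitive) (hχ1 : χ ≠ 1)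
    (hψ : Function.Injective ψ) :
    gaussSum χ ψ * χ⁻¹.LFunction 1 = -∑ t, χ t * Complex.log (1 - ψ t) := by
  have hN : Nontrivial (ZMod N) := by
    refine not_subsingleton_iff_nontrivial.1 fun _ => hχ1 ?_
    ext t
    rw [Subsingleton.elim (t : ZMod N) 1, map_one, map_one]
  have habel := (Complex.tendsto_tsum_powerSeries_nhdsWithin_lt
    (tendsto_sum_dirichletCharacter_div (inv_ne_one.2 hχ1) χ⁻¹.map_zero)).const_mul (gaussSum χ ψ)
  rw [tendsto_map'_iff] at habel
  refine tendsto_nhds_unique (habel.congr' ?_) ?_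
    (f := fun x : ℝ => -∑ t, χ t * Complex.log (1 - ψ t * x))
  · filter_upwards [Ioo_mem_nhdsLT (zero_lt_one (α := ℝ))] with x hx
    rw [Function.comp_apply, ← tsum_mul_left]
    exact (hasSum_gaussSum_mul_inv_mul_pow hχ (abs_lt.2 ⟨by linarith [hx.1], hx.2⟩)).tsum_eq
  · refine (tendsto_finsetSum _ fun t _ => ?_).neg
    rcases eq_or_ne t 0 with rfl | ht
    · simp only [χ.map_zero, zero_mul, tendsto_const_nhds]
    · have hcont : ContinuousAt (fun x : ℝ => Complex.log (1 - ψ t * x)) 1 :=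
        ContinuousAt.clog (by fun_prop) (.inl (by simpa using one_sub_addChar_re_pos hψ ht))
      have hlim := hcont.tendsto
      rw [Complex.ofReal_one, mul_one] at hlim
      exact (hlim.mono_left nhdsWithin_le_nhds).const_mul _

end LFunctionOne

section LFunctionLegendre

variable {p m : ℕ} [Fact p.Prime] (hp : p = 4 * m + 1) {ψ : AddChar (ZMod p) ℂ}
include hp

lemma sum_residueClass_log_one_sub (hψ : Function.Injective ψ) (e : ℤˣ) :
    ∑ x ∈ residueClass (ZMod p) e, Complex.log (1 - ψ x) = Real.log ‖cyclotomicProd ψ e‖ := by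
  have hne (x) (hx : x ∈ residueClass (ZMod p) e) : ‖1 - ψ x‖ ≠ 0 :=
    norm_ne_zero_iff.2 (one_sub_ne_zero_of_injective hψ (ne_zero_of_mem_residueClass hx))
  have hreal : starRingEnd ℂ (∑ x ∈ residueClass (ZMod p) e, Complex.log (1 - ψ x)) =
      ∑ x ∈ residueClass (ZMod p) e, Complex.log (1 - ψ x) := by
    rw [map_sum, ← sum_residueClass_neg (quadraticChar_neg_one_of_card (zmod_card_eq hp)) e
      fun x => Complex.log (1 - ψ x)]
    refine sum_congr rfl fun x hx => ?_
    have hre := one_sub_addChar_re_pos hψ (ne_zero_of_mem_residueClass hx)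
    rw [AddChar.map_neg_eq_conj, ← Complex.log_conj, map_sub, map_one]
    exact fun h => hre.not_gt (Complex.arg_eq_pi_iff.1 h).1
  rw [← Complex.conj_eq_iff_re.1 hreal, Complex.re_sum, cyclotomicProd, norm_prod,
    Real.log_prod hne]
  simp_rw [Complex.log_re]

lemma ofReal_norm_cyclotomicProd (hψ : Function.Injective ψ) (e : ℤˣ) :
    (‖cyclotomicProd ψ e‖ : ℂ) = cyclotomicProd ψ e := by
  rw [← Real.exp_log (norm_pos_iff.2 (cyclotomicProd_ne_zero hψ e)), Complex.ofReal_exp,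
    ← sum_residueClass_log_one_sub hp hψ, Complex.exp_sum, cyclotomicProd]
  exact prod_congr rfl fun x hx =>
    Complex.exp_log (one_sub_ne_zero_of_injective hψ (ne_zero_of_mem_residueClass hx))

theorem gaussSum_mul_LFunction_legendreChar_one (hψ : Function.Injective ψ) :
    gaussSum (legendreChar p ℂ) ψ * (legendreChar p ℂ).LFunction 1 =
      (Real.log ‖cyclotomicProd ψ (-1)‖ - Real.log ‖cyclotomicProd ψ 1‖ : ℝ) := by
  have hL := gaussSum_mul_LFunction_inv_one (isPrimitive_legendreChar hp) (legendreChar_ne_one hp)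
    hψ
  rw [legendreChar_isQuadratic.inv, sum_univ_eq_sum_residueClass 1] at hL
  have hclass (e : ℤˣ) : ∑ x ∈ residueClass (ZMod p) e,
      legendreChar p ℂ x * Complex.log (1 - ψ x) = (e : ℤ) * Real.log ‖cyclotomicProd ψ e‖ := by
    rw [← sum_residueClass_log_one_sub hp hψ, mul_sum]
    exact sum_congr rfl fun x hx => by rw [legendreChar_apply, mem_residueClass.1 hx]
  rw [hL, hclass, hclass, MulChar.map_zero]
  push_cast
  ring

lemma exists_injective_gaussSum_eq_sqrt :
    ∃ ψ : AddChar (ZMod p) ℂ, Function.Injective ψ ∧ gaussSum (legendreChar p ℂ) ψ = (√p : ℝ) := by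
  have hinj : Function.Injective (ZMod.stdAddChar (N := p)) := ZMod.injective_stdAddChar
  have hsq : gaussSum (legendreChar p ℂ) ZMod.stdAddChar ^ 2 = ((√p : ℝ) : ℂ) ^ 2 := by
    rw [gaussSum_legendreChar_sq hp hinj, ← Complex.ofReal_pow, Real.sq_sqrt p.cast_nonneg,
      Complex.ofReal_natCast]
  rcases sq_eq_sq_iff_eq_or_eq_neg.1 hsq with h | h
  · exact ⟨_, hinj, h⟩
  · obtain ⟨a, ha⟩ := quadraticChar_exists_neg_one (ringChar_ne_two_of_card (zmod_card_eq hp))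
    have ha0 : a ≠ 0 := ne_zero_of_quadraticChar_eq (e := -1) ha
    refine ⟨ZMod.stdAddChar.mulShift a, fun x y h => mul_left_cancel₀ ha0 (hinj h), ?_⟩
    rw [gaussSum_legendreChar_mulShift hp, h, legendreChar_apply, ha]
    simp

end LFunctionLegendre

/-! ### Quadratic fields of discriminant `4 * m + 1` -/

section QuadraticBasis

open Module NumberField

/-- An `R`-basis of `S` of the form `1, θ` with `θ ^ 2 = θ + m`, as the ring of integers of a
quadratic field of discriminant `4 * m + 1` has. -/
structure IsQuadraticBasis {R S : Type*} [CommRing R] [CommRing S] [Algebra R S] (m : R)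
    (b : Basis (Fin 2) R S) : Prop where
  zero_eq : b 0 = 1
  one_sq : b 1 ^ 2 = b 1 + algebraMap R S m

namespace IsQuadraticBasis

variable {R S : Type*} [CommRing R] [CommRing S] [Algebra R S] {m : R} {b : Basis (Fin 2) R S}

lemma repr_add_mul (hb : IsQuadraticBasis m b) (u v : R) :
    b.repr (algebraMap R S u + algebraMap R S v * b 1) =
      Finsupp.single 0 u + Finsupp.single 1 v := by
  rw [Algebra.algebraMap_eq_smul_one, ← hb.zero_eq, ← Algebra.smul_def, map_add, map_smul,
    map_smul, b.repr_self, b.repr_self]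
  simp only [Finsupp.smul_single, smul_eq_mul, mul_one]

lemma exists_eq_add_mul (hb : IsQuadraticBasis m b) (y : S) :
    ∃ u v : R, y = algebraMap R S u + algebraMap R S v * b 1 := by
  refine ⟨b.repr y 0, b.repr y 1, ?_⟩
  conv_lhs => rw [← b.sum_repr y, Fin.sum_univ_two, hb.zero_eq, Algebra.smul_def,
    Algebra.smul_def, mul_one]

lemma leftMulMatrix_add_mul (hb : IsQuadraticBasis m b) (u v : R) :
    Algebra.leftMulMatrix b (algebraMap R S u + algebraMap R S v * b 1) =
      !![u, v * m; v, u + v] := by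
  have hmul : (algebraMap R S u + algebraMap R S v * b 1) * b 1 =
      algebraMap R S (v * m) + algebraMap R S (u + v) * b 1 := by
    rw [map_mul, map_add]
    linear_combination algebraMap R S v * hb.one_sq
  ext i j
  rw [Algebra.leftMulMatrix_eq_repr_mul]
  fin_cases j
  · simp only [Fin.zero_eta, hb.zero_eq, mul_one, hb.repr_add_mul]
    fin_cases i <;> simp
  · simp only [Fin.mk_one, hmul, hb.repr_add_mul]
    fin_cases i <;> simp

lemma trace_add_mul (hb : IsQuadraticBasis m b) (u v : R) :
    Algebra.trace R S (algebraMap R S u + algebraMap R S v * b 1) = 2 * u + v := by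
  rw [Algebra.trace_eq_matrix_trace b, hb.leftMulMatrix_add_mul, Matrix.trace_fin_two_of]
  ring

lemma norm_add_mul (hb : IsQuadraticBasis m b) (u v : R) :
    Algebra.norm R (algebraMap R S u + algebraMap R S v * b 1) =
      u ^ 2 + u * v - m * v ^ 2 := by
  rw [Algebra.norm_eq_matrix_det b, hb.leftMulMatrix_add_mul, Matrix.det_fin_two_of]
  ring

lemma discr_eq (hb : IsQuadraticBasis m b) : Algebra.discr R b = 4 * m + 1 := by
  have htrace_one : Algebra.trace R S 1 = 2 := by simpa using hb.trace_add_mul 1 0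
  have htrace : Algebra.trace R S (b 1) = 1 := by simpa using hb.trace_add_mul 0 1
  have htrace_sq : Algebra.trace R S (b 1 * b 1) = 2 * m + 1 := by
    rw [← hb.trace_add_mul m 1, ← sq, hb.one_sq, map_one (algebraMap R S), one_mul,
      add_comm]
  rw [Algebra.discr_def, Matrix.det_fin_two]
  simp only [Algebra.traceMatrix_apply, Algebra.traceForm_apply, hb.zero_eq, one_mul, mul_one,
    htrace_one, htrace, htrace_sq]
  ring

end IsQuadraticBasis

lemma exists_isQuadraticBasis_of_finrank_eq_two {F L : Type*} [Field F] [Field L] [Algebra F L]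
    (hdeg : finrank F L = 2) {m : F} {θ : L} (hθ : ∀ r : F, algebraMap F L r ≠ θ)
    (hsq : θ ^ 2 = θ + algebraMap F L m) :
    ∃ b : Basis (Fin 2) F L, IsQuadraticBasis m b := by
  have hli : LinearIndependent F ![1, θ] := by
    rw [LinearIndependent.pair_iff' one_ne_zero]
    intro r
    rw [← Algebra.algebraMap_eq_smul_one]
    exact hθ r
  let b := basisOfLinearIndependentOfCardEqFinrank hli (by rw [Fintype.card_fin, hdeg])
  have hb : ⇑b = ![1, θ] := coe_basisOfLinearIndependentOfCardEqFinrank _ _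
  exact ⟨b, ⟨by simp [hb], by simpa [hb] using hsq⟩⟩

lemma isIntegral_of_squarefree_mul_sq {d : ℤ} (hd : Squarefree d) {r : ℚ} {z : ℤ}
    (h : d * r ^ 2 = z) : IsIntegral ℤ r := by
  have hnum : d * r.num ^ 2 = z * (r.den : ℤ) ^ 2 := by
    have hden : (r.den : ℚ) ≠ 0 := mod_cast r.den_ne_zero
    rw [← r.num_div_den] at h
    field_simp at h
    rw [mul_comm z]
    exact_mod_cast h
  have hcop : IsCoprime ((r.den : ℤ) ^ 2) (r.num ^ 2) :=
    r.isCoprime_num_den.symm.pow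
  have hdvd : (r.den : ℤ) * r.den ∣ d := by
    rw [← sq]
    exact hcop.dvd_of_dvd_mul_right ⟨z, by rw [hnum, mul_comm]⟩
  have hden : r.den = 1 := by simpa using Int.isUnit_iff_natAbs_eq.1 (hd _ hdvd)
  rw [← Rat.coe_int_num_of_den_eq_one hden]
  exact isIntegral_algebraMap

variable {K : Type*} [Field K] [NumberField K] {m : ℤ}

lemma finrank_eq_two_of_basis_ringOfIntegers (b : Basis (Fin 2) ℤ (𝓞 K)) :
    finrank ℚ K = 2 := by
  rw [← RingOfIntegers.rank, finrank_eq_card_basis b, Fintype.card_fin]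

/-- The trace `2 * u + v` and the norm `N` of `u + v * θ` satisfy
`(2 * u + v) ^ 2 - 4 * N = (4 * m + 1) * v ^ 2`, so `v` is integral; then `u` is a root of the
monic polynomial `X ^ 2 + v * X - (m * v ^ 2 + N)`. -/
lemma IsQuadraticBasis.exists_int_eq_add_mul {b : Basis (Fin 2) ℚ K}
    (hb : IsQuadraticBasis (m : ℚ) b) (hm : Squarefree (4 * m + 1)) {y : K}
    (hy : IsIntegral ℤ y) : ∃ u v : ℤ, y = u + v * b 1 := by
  obtain ⟨u, v, rfl⟩ := hb.exists_eq_add_mul y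
  obtain ⟨t, ht⟩ := IsIntegrallyClosed.isIntegral_iff.1 (Algebra.isIntegral_trace (L := ℚ) hy)
  obtain ⟨n, hn⟩ := IsIntegrallyClosed.isIntegral_iff.1 (Algebra.isIntegral_norm ℚ hy)
  rw [hb.trace_add_mul, eq_intCast] at ht
  rw [hb.norm_add_mul, eq_intCast] at hn
  obtain ⟨v, rfl⟩ := IsIntegrallyClosed.isIntegral_iff.1 <|
    isIntegral_of_squarefree_mul_sq (r := v) (z := t ^ 2 - 4 * n) hm (by
      push_cast
      rw [ht, hn]
      ring)
  rw [eq_intCast] at hn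
  obtain ⟨u, rfl⟩ := IsIntegrallyClosed.isIntegral_iff.1 <|
    show IsIntegral ℤ u from ⟨X ^ 2 + C v * X - C (m * v ^ 2 + n), by monicity!, by
      simp only [eval₂_sub, eval₂_add, eval₂_mul, eval₂_pow, eval₂_X, eval₂_C]
      push_cast [eq_intCast (algebraMap ℤ ℚ)]
      rw [hn]
      ring⟩
  exact ⟨u, v, by simp⟩

lemma isIntegral_of_sq_eq_add {R S : Type*} [CommRing R] [CommRing S] [Algebra R S] {m : R}
    {θ : S} (h : θ ^ 2 = θ + algebraMap R S m) : IsIntegral R θ :=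
  ⟨X ^ 2 - X - C m, by monicity!, by simp [h]⟩

lemma IsQuadraticBasis.exists_ringOfIntegers {c : Basis (Fin 2) ℚ K}
    (hc : IsQuadraticBasis (m : ℚ) c) (hm : Squarefree (4 * m + 1)) :
    ∃ b : Basis (Fin 2) ℤ (𝓞 K), IsQuadraticBasis m b := by
  have hsq : c 1 ^ 2 = c 1 + m := by simpa using hc.one_sq
  let θ : 𝓞 K := ⟨c 1, isIntegral_of_sq_eq_add (m := m) (by simpa using hsq)⟩
  have hθ : (θ : K) = c 1 := rfl
  have hli : LinearIndependent ℤ ![1, θ] := by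
    rw [LinearIndependent.pair_iff]
    intro u v huv
    have huvK : algebraMap ℚ K u + algebraMap ℚ K v * c 1 = 0 := by
      rw [← hθ]
      simpa using congrArg (algebraMap (𝓞 K) K) huv
    have hrepr := hc.repr_add_mul u v
    rw [huvK, map_zero] at hrepr
    exact ⟨by simpa using (DFunLike.congr_fun hrepr 0).symm,
      by simpa using (DFunLike.congr_fun hrepr 1).symm⟩
  have hspan : ⊤ ≤ Submodule.span ℤ (Set.range ![1, θ]) := by
    rintro y -
    obtain ⟨u, v, huv⟩ := hc.exists_int_eq_add_mul hm y.isIntegral_coe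
    rw [Matrix.range_cons_cons_empty, Submodule.mem_span_pair]
    refine ⟨u, v, RingOfIntegers.ext ?_⟩
    simp [huv, hθ]
  refine ⟨Basis.mk hli hspan, by simp, RingOfIntegers.ext ?_⟩
  simpa [hθ] using hsq

lemma exists_isQuadraticBasis_ringOfIntegers (hdeg : finrank ℚ K = 2)
    (hm : Squarefree (4 * m + 1)) (hns : ¬ IsSquare (4 * m + 1)) {x : K}
    (hx : x ^ 2 = 4 * m + 1) : ∃ b : Basis (Fin 2) ℤ (𝓞 K), IsQuadraticBasis m b := by
  have hθ_sq : ((1 + x) / 2) ^ 2 = (1 + x) / 2 + algebraMap ℚ K m := by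
    rw [eq_ratCast, Rat.cast_intCast]
    linear_combination hx / 4
  have hθ_irrational (r : ℚ) : algebraMap ℚ K r ≠ (1 + x) / 2 := by
    intro hr
    have hxr : x = ((2 * r - 1 : ℚ) : K) := by
      rw [eq_ratCast] at hr
      push_cast
      linear_combination -2 * hr
    refine hns (Rat.isSquare_intCast_iff.1 ⟨2 * r - 1, ?_⟩)
    rw [hxr] at hx
    rw [← sq]
    exact_mod_cast hx.symm
  obtain ⟨c, hc⟩ := exists_isQuadraticBasis_of_finrank_eq_two hdeg hθ_irrational hθ_sq
  exact hc.exists_ringOfIntegers hm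

end QuadraticBasis

section RealQuadraticField

open Module NumberField InfinitePlace

variable {K : Type*} [Field K]

lemma isReal_mk_ofRealHom_comp (f : K →+* ℝ) : (mk (Complex.ofRealHom.comp f)).IsReal := by
  rw [isReal_mk_iff, ComplexEmbedding.isReal_iff]
  ext y
  simp

/-- The least unit exceeding `1` under the real embedding `f`: for a real quadratic field this is
the fundamental unit normalised by `f ε > 1`. -/
structure IsFundamentalUnit (f : K →+* ℝ) (ε : (𝓞 K)ˣ) : Prop where
  one_lt : 1 < f (algebraMap (𝓞 K) K ε)
  le : ∀ u : (𝓞 K)ˣ, 1 < f (algebraMap (𝓞 K) K u) →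
    f (algebraMap (𝓞 K) K ε) ≤ f (algebraMap (𝓞 K) K u)

lemma IsFundamentalUnit.exists_eq_zpow {f : K →+* ℝ} {ε : (𝓞 K)ˣ} (hε : IsFundamentalUnit f ε)
    {u : (𝓞 K)ˣ} (hu : 0 < f (algebraMap (𝓞 K) K u)) : ∃ n : ℤ, u = ε ^ n := by
  let g : (𝓞 K)ˣ →* ℝˣ := Units.map (f.comp (algebraMap (𝓞 K) K) : 𝓞 K →* ℝ)
  have hg_injective : Function.Injective g :=
    Units.map_injective (f.injective.comp RingOfIntegers.coe_injective)
  have hε_pos : 0 < (g ε : ℝ) := one_pos.trans hε.one_lt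
  obtain ⟨n, hle, hlt⟩ := exists_mem_Ico_zpow (x := (g u : ℝ)) hu hε.one_lt
  refine ⟨n, hg_injective (Units.ext ?_)⟩
  rw [map_zpow, Units.val_zpow_eq_zpow_val]
  by_contra hne
  have hpow_pos : 0 < (g ε : ℝ) ^ n := zpow_pos hε_pos n
  have hquot : (g (u * (ε ^ n)⁻¹) : ℝ) = g u / (g ε : ℝ) ^ n := by
    rw [map_mul, map_inv, map_zpow, Units.val_mul, Units.val_inv_eq_inv_val,
      Units.val_zpow_eq_zpow_val, div_eq_mul_inv]
  have hquot_ge : (g ε : ℝ) ≤ g (u * (ε ^ n)⁻¹) := by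
    refine hε.le _ (show 1 < (g (u * (ε ^ n)⁻¹) : ℝ) from ?_)
    rw [hquot, one_lt_div hpow_pos]
    exact lt_of_le_of_ne hle (Ne.symm hne)
  rw [hquot, le_div_iff₀ hpow_pos, ← zpow_one_add₀ hε_pos.ne', add_comm] at hquot_ge
  exact hquot_ge.not_gt hlt

variable [NumberField K]

lemma nrRealPlaces_pos (f : K →+* ℝ) : 0 < nrRealPlaces K := by
  classical
  exact Fintype.card_pos_iff.2 ⟨⟨_, isReal_mk_ofRealHom_comp f⟩⟩

lemma torsionOrder_eq_two_of_ringHom_real (f : K →+* ℝ) : Units.torsionOrder K = 2 := by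
  obtain ⟨ζ, hζ⟩ := IsCyclic.exists_generator (α := Units.torsion K)
  have hprim : IsPrimitiveRoot (algebraMap (𝓞 K) K (ζ : (𝓞 K)ˣ)) (Units.torsionOrder K) := by
    rw [Units.torsionOrder, ← orderOf_eq_card_of_forall_mem_zpowers hζ, ← Subgroup.orderOf_coe,
      ← orderOf_units, ← orderOf_injective (algebraMap (𝓞 K) K).toMonoidHom
        RingOfIntegers.coe_injective]
    exact IsPrimitiveRoot.orderOf _
  have hle : Units.torsionOrder K ≤ 2 := by
    by_contra! hlt
    exact (nrRealPlaces_pos f).ne' (hprim.nrRealPlaces_eq_zero_of_two_lt hlt)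
  exact le_antisymm hle
    (Nat.le_of_dvd (Units.torsionOrder_pos K) (Units.even_torsionOrder K).two_dvd)

lemma nrRealPlaces_eq_two_and_nrComplexPlaces_eq_zero (hdeg : finrank ℚ K = 2) (f : K →+* ℝ) :
    nrRealPlaces K = 2 ∧ nrComplexPlaces K = 0 := by
  have hrank := card_add_two_mul_card_eq_rank K
  have hpos := nrRealPlaces_pos f
  omega

lemma card_infinitePlace_eq_two (hdeg : finrank ℚ K = 2) (f : K →+* ℝ) :
    Fintype.card (InfinitePlace K) = 2 := by
  obtain ⟨hreal, hcomplex⟩ := nrRealPlaces_eq_two_and_nrComplexPlaces_eq_zero hdeg f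
  rw [card_eq_nrRealPlaces_add_nrComplexPlaces, hreal, hcomplex]

namespace IsFundamentalUnit

variable {f : K →+* ℝ} {ε : (𝓞 K)ˣ}

lemma closure_sup_torsion_eq_top (hε : IsFundamentalUnit f ε) :
    Subgroup.closure {ε} ⊔ Units.torsion K = ⊤ := by
  rw [eq_top_iff]
  rintro u -
  have hpow (n : ℤ) : ε ^ n ∈ Subgroup.closure {ε} ⊔ Units.torsion K :=
    Subgroup.mem_sup_left (zpow_mem (Subgroup.mem_closure_singleton_self ε) n)
  have hne : f (algebraMap (𝓞 K) K u) ≠ 0 := by simp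
  rcases hne.lt_or_gt with hneg | hpos
  · obtain ⟨n, hn⟩ := hε.exists_eq_zpow (u := -u) (by simpa using hneg)
    rw [← neg_neg u, hn, ← neg_one_mul]
    exact mul_mem (Subgroup.mem_sup_right neg_one_mem_torsion) (hpow n)
  · obtain ⟨n, rfl⟩ := hε.exists_eq_zpow hpos
    exact hpow n

lemma regulator_eq_log (hε : IsFundamentalUnit f ε) (hdeg : finrank ℚ K = 2) :
    Units.regulator K = Real.log (f (algebraMap (𝓞 K) K ε)) := by
  classical
  have hcard := card_infinitePlace_eq_two hdeg f
  have hrank : Units.rank K = 1 := by rw [Units.rank, hcard]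
  have : Nonempty (Fin (Units.rank K)) := ⟨⟨0, by rw [hrank]; exact one_pos⟩⟩
  have hreg := Units.regOfFamily_div_regulator (K := K) fun _ => ε
  rw [Set.range_const, hε.closure_sup_torsion_eq_top, Subgroup.index_top, Nat.cast_one,
    div_eq_one_iff_eq (Units.regulator_ne_zero K)] at hreg
  let w : InfinitePlace K := InfinitePlace.mk (Complex.ofRealHom.comp f)
  have hw : w (algebraMap (𝓞 K) K ε) = f (algebraMap (𝓞 K) K ε) := by
    rw [apply, RingHom.comp_apply, Complex.ofRealHom_eq_coe, Complex.norm_real,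
      Real.norm_of_nonneg (one_pos.trans hε.one_lt).le]
  have : Nontrivial (InfinitePlace K) :=
    Fintype.one_lt_card_iff_nontrivial.1 (by rw [hcard]; exact one_lt_two)
  obtain ⟨w', hw'⟩ := exists_ne w
  have hcard_ne : Fintype.card {v // v ≠ w'} = 1 := by
    rw [Fintype.card_subtype_compl, hcard, Fintype.card_subtype_eq]
  have : Subsingleton {v // v ≠ w'} := Fintype.card_le_one_iff_subsingleton.1 hcard_ne.le
  have e : {v // v ≠ w'} ≃ Fin (Units.rank K) :=
    Fintype.equivOfCardEq (by rw [hcard_ne, Fintype.card_fin, hrank])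
  rw [← hreg, Units.regOfFamily_eq_det _ w' e, Matrix.det_eq_elem_of_subsingleton _ ⟨w, hw'.symm⟩,
    Matrix.of_apply, mult_isReal ⟨w, isReal_mk_ofRealHom_comp f⟩, Nat.cast_one, one_mul]
  change |Real.log (w (algebraMap (𝓞 K) K ε))| = _
  rw [hw, abs_of_nonneg (Real.log_nonneg hε.one_lt.le)]

lemma dedekindZeta_residue_eq (hε : IsFundamentalUnit f ε) {m : ℤ} {b : Basis (Fin 2) ℤ (𝓞 K)}
    (hb : IsQuadraticBasis m b) :
    dedekindZeta_residue K =
      2 * classNumber K * Real.log (f (algebraMap (𝓞 K) K ε)) / √|(4 * m + 1 : ℤ)| := by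
  have hdeg := finrank_eq_two_of_basis_ringOfIntegers b
  obtain ⟨hreal, hcomplex⟩ := nrRealPlaces_eq_two_and_nrComplexPlaces_eq_zero hdeg f
  rw [dedekindZeta_residue_def, hreal, hcomplex, torsionOrder_eq_two_of_ringHom_real f,
    ← discr_eq_discr K b, hb.discr_eq, hε.regulator_eq_log hdeg]
  field_simp
  ring

end IsFundamentalUnit

end RealQuadraticField

/-! ### Counting ideals of given norm -/

section IdealCount

open NumberField Ideal

lemma mul_sup_eq_left_of_isCoprime {R : Type*} [CommRing R] {A B I J : Ideal R}
    (hAB : IsCoprime A B) (hI : A ≤ I) (hJ : B ≤ J) : I * J ⊔ A = I := by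
  have hJA : J ⊔ A = ⊤ :=
    top_unique <| (isCoprime_iff_sup_eq.1 hAB.symm).symm.le.trans (sup_le_sup_right hJ A)
  rw [mul_sup_eq_of_coprime_right hJA, sup_eq_left.2 hI]

lemma eq_and_eq_of_mul_eq_mul_of_isCoprime {R : Type*} [CommRing R] {A B I I' J J' : Ideal R}
    (hAB : IsCoprime A B) (hI : A ≤ I) (hI' : A ≤ I') (hJ : B ≤ J) (hJ' : B ≤ J')
    (h : I * J = I' * J') : I = I' ∧ J = J' := by
  constructor
  · rw [← mul_sup_eq_left_of_isCoprime hAB hI hJ, h, mul_sup_eq_left_of_isCoprime hAB hI' hJ']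
  · rw [← mul_sup_eq_left_of_isCoprime hAB.symm hJ hI, mul_comm J, h, mul_comm I',
      mul_sup_eq_left_of_isCoprime hAB.symm hJ' hI']

lemma sup_mul_sup_eq_of_isCoprime {R : Type*} [CommRing R] {A B I : Ideal R}
    (hAB : IsCoprime A B) (hI : A * B ≤ I) : (I ⊔ A) * (I ⊔ B) = I := by
  refine le_antisymm ?_ ?_
  · rw [Ideal.sup_mul, Ideal.mul_sup, Ideal.mul_sup]
    exact sup_le (sup_le mul_le_left mul_le_left) (sup_le mul_le_right hI)
  · calc I = A * I ⊔ I * B := by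
          rw [mul_comm A, ← Ideal.mul_sup, isCoprime_iff_sup_eq.1 hAB, mul_top]
      _ ≤ (I ⊔ A) * (I ⊔ B) :=
          sup_le (mul_mono le_sup_right le_sup_left) (mul_mono le_sup_left le_sup_right)

lemma eq_and_eq_of_mul_eq_mul_of_coprime {a b c d : ℕ} (h : c * d = a * b)
    (hcb : c.Coprime b) (hda : d.Coprime a) : c = a ∧ d = b :=
  ⟨Nat.dvd_antisymm (hcb.dvd_of_dvd_mul_right ⟨d, h.symm⟩)
      (hda.symm.dvd_of_dvd_mul_right ⟨b, h⟩),
    Nat.dvd_antisymm (hda.dvd_of_dvd_mul_left ⟨c, by rw [← h, mul_comm]⟩)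
      (hcb.symm.dvd_of_dvd_mul_left ⟨a, by rw [h, mul_comm]⟩)⟩

lemma exists_eq_pow_mul_pow_of_dvd {R : Type*} [CommRing R] [IsDedekindDomain R]
    {A B I : Ideal R} (hA : Prime A) (hB : Prime B) {k l : ℕ} (hI : I ∣ A ^ k * B ^ l) :
    ∃ i j, I = A ^ i * B ^ j := by
  obtain ⟨I₁, I₂, hI₁, hI₂, rfl⟩ := exists_dvd_and_dvd_of_dvd_mul hI
  obtain ⟨i, -, hi⟩ := (dvd_prime_pow hA k).1 hI₁
  obtain ⟨j, -, hj⟩ := (dvd_prime_pow hB l).1 hI₂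
  exact ⟨i, j, by rw [associated_iff_eq.1 hi, associated_iff_eq.1 hj]⟩

lemma le_of_pow_mul_pow_dvd {M : Type*} [CommSemiring M] [IsCancelMulZero M] {x y : M}
    (hx : Prime x) (hxy : IsCoprime x y) {i j k l : ℕ} (h : x ^ i * y ^ j ∣ x ^ k * y ^ l) :
    i ≤ k :=
  (pow_dvd_pow_iff hx.ne_zero hx.not_isUnit).1 <|
    hxy.pow.dvd_of_dvd_mul_right (dvd_of_mul_right_dvd h)

variable (K : Type*) [Field K] [NumberField K]

/-- The number of integral ideals of norm `n`, the `n`-th coefficient of the Dedekind zeta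
function of `K`. The value at `0` is `0`, although the zero ideal has norm `0`. -/
noncomputable def idealCount : ArithmeticFunction ℕ :=
  toArithmeticFunction fun n => Nat.card {I : Ideal (𝓞 K) // absNorm I = n}

variable {K}

lemma idealCount_apply {n : ℕ} (hn : n ≠ 0) :
    idealCount K n = Nat.card {I : Ideal (𝓞 K) // absNorm I = n} :=
  if_neg hn

lemma idealCount_one : idealCount K 1 = 1 := by
  simp [idealCount_apply one_ne_zero, absNorm_eq_one_iff]

lemma span_natCast_le_of_absNorm_eq {I : Ideal (𝓞 K)} {n : ℕ} (hI : absNorm I = n) :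
    span {(n : 𝓞 K)} ≤ I :=
  hI ▸ span_singleton_absNorm_le I

lemma isCoprime_span_natCast {R : Type*} [CommRing R] {a b : ℕ} (h : a.Coprime b) :
    IsCoprime (span {(a : R)}) (span {(b : R)}) :=
  (isCoprime_span_singleton_iff _ _).2 h.cast

lemma coprime_absNorm_sup_span_natCast {a b : ℕ} (h : a.Coprime b) (I : Ideal (𝓞 K)) :
    (absNorm (I ⊔ span {(a : 𝓞 K)})).Coprime b := by
  refine Nat.Coprime.coprime_dvd_left (absNorm_dvd_absNorm_of_le le_sup_right) ?_
  rw [absNorm_span_natCast]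
  exact h.pow_left _

lemma idealCount_mul {a b : ℕ} (h : a.Coprime b) :
    idealCount K (a * b) = idealCount K a * idealCount K b := by
  rcases eq_or_ne a 0 with rfl | ha
  · simp
  rcases eq_or_ne b 0 with rfl | hb
  · simp
  rw [idealCount_apply ha, idealCount_apply hb, idealCount_apply (mul_ne_zero ha hb),
    ← Nat.card_prod]
  have hcop : IsCoprime (span {(a : 𝓞 K)}) (span {(b : 𝓞 K)}) := isCoprime_span_natCast h
  refine (Nat.card_congr (Equiv.ofBijective
    (fun x : {I : Ideal (𝓞 K) // absNorm I = a} × {J : Ideal (𝓞 K) // absNorm J = b} =>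
      (⟨x.1 * x.2, by rw [map_mul, x.1.2, x.2.2]⟩ : {I : Ideal (𝓞 K) // absNorm I = a * b}))
    ⟨?_, ?_⟩)).symm
  · rintro ⟨⟨I, hI⟩, ⟨J, hJ⟩⟩ ⟨⟨I', hI'⟩, ⟨J', hJ'⟩⟩ hmul
    obtain ⟨rfl, rfl⟩ := eq_and_eq_of_mul_eq_mul_of_isCoprime hcop
      (span_natCast_le_of_absNorm_eq hI) (span_natCast_le_of_absNorm_eq hI')
      (span_natCast_le_of_absNorm_eq hJ) (span_natCast_le_of_absNorm_eq hJ')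
      (congrArg Subtype.val hmul)
    rfl
  · rintro ⟨I, hI⟩
    have hle : span {(a : 𝓞 K)} * span {(b : 𝓞 K)} ≤ I := by
      rw [span_singleton_mul_span_singleton, ← Nat.cast_mul]
      exact span_natCast_le_of_absNorm_eq hI
    have hmul := sup_mul_sup_eq_of_isCoprime hcop hle
    obtain ⟨hNa, hNb⟩ := eq_and_eq_of_mul_eq_mul_of_coprime
      (by rw [← map_mul absNorm, hmul, hI]) (coprime_absNorm_sup_span_natCast h I)
      (coprime_absNorm_sup_span_natCast h.symm I)
    exact ⟨⟨⟨_, hNa⟩, ⟨_, hNb⟩⟩, Subtype.ext hmul⟩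

lemma isMultiplicative_idealCount : (idealCount K).IsMultiplicative :=
  ⟨idealCount_one, idealCount_mul⟩

lemma exists_eq_pow_mul_pow_of_absNorm_eq {q k : ℕ} {A B I : Ideal (𝓞 K)} (hA : Prime A)
    (hB : Prime B) (hAB : A * B ≤ span {(q : 𝓞 K)}) (hI : absNorm I = q ^ k) :
    ∃ i j, I = A ^ i * B ^ j := by
  refine exists_eq_pow_mul_pow_of_dvd hA hB (k := k) (l := k) (dvd_iff_le.2 ?_)
  rw [← mul_pow]
  refine (pow_right_mono hAB k).trans ?_
  rw [span_singleton_pow, ← Nat.cast_pow]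
  exact span_natCast_le_of_absNorm_eq hI

lemma prime_of_prime_absNorm {P : Ideal (𝓞 K)} (hP : (absNorm P).Prime) : Prime P :=
  prime_of_isPrime (fun h => hP.ne_zero (absNorm_eq_zero_iff.2 h))
    (isPrime_of_irreducible_absNorm hP)

lemma absNorm_span_natCast_of_finrank_eq_two (hdeg : Module.finrank ℚ K = 2) (n : ℕ) :
    absNorm (span {(n : 𝓞 K)}) = n ^ 2 := by
  rw [absNorm_span_natCast, RingOfIntegers.rank, hdeg]

lemma absNorm_eq_and_eq_of_mul_eq_span {q : ℕ} (hq : q.Prime)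
    (hdeg : Module.finrank ℚ K = 2) {A B : Ideal (𝓞 K)} (hA : A ≠ ⊤) (hB : B ≠ ⊤)
    (hAB : A * B = span {(q : 𝓞 K)}) : absNorm A = q ∧ absNorm B = q :=
  (hq.mul_eq_prime_sq_iff (mt absNorm_eq_one_iff.1 hA) (mt absNorm_eq_one_iff.1 hB)).1 <| by
    rw [← map_mul, hAB, absNorm_span_natCast_of_finrank_eq_two hdeg]

lemma prime_span_natCast_of_forall_absNorm_ne {q : ℕ} (hq : q.Prime)
    (hdeg : Module.finrank ℚ K = 2) (h : ∀ P : Ideal (𝓞 K), absNorm P ≠ q) :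
    Prime (span {(q : 𝓞 K)}) := by
  have hnorm := absNorm_span_natCast_of_finrank_eq_two hdeg q
  refine Irreducible.prime ⟨fun hu => ?_, fun A B hAB => ?_⟩
  · rw [Ideal.isUnit_iff.1 hu, absNorm_top] at hnorm
    exact (Nat.one_lt_pow two_ne_zero hq.one_lt).ne hnorm
  · by_contra! hAB_units
    simp only [Ideal.isUnit_iff] at hAB_units
    exact h A (absNorm_eq_and_eq_of_mul_eq_span hq hdeg hAB_units.1 hAB_units.2 hAB.symm).1

lemma idealCount_prime_pow_of_mul_self_le {q f : ℕ} (hq : q.Prime) {P : Ideal (𝓞 K)}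
    (hP : Prime P) (hN : absNorm P = q ^ f) (hPP : P * P ≤ span {(q : 𝓞 K)}) (k : ℕ) :
    idealCount K (q ^ k) = if f ∣ k then 1 else 0 := by
  have hf : f ≠ 0 := by
    rintro rfl
    exact hP.not_isUnit (Ideal.isUnit_iff.2 (absNorm_eq_one_iff.1 (hN.trans (pow_zero q))))
  have hnorm (i : ℕ) : absNorm (P ^ i) = q ^ (f * i) := by rw [map_pow, hN, pow_mul]
  have hpow (I : Ideal (𝓞 K)) (hI : absNorm I = q ^ k) : ∃ i, I = P ^ i ∧ f * i = k := by
    obtain ⟨i, j, rfl⟩ := exists_eq_pow_mul_pow_of_absNorm_eq hP hP hPP hI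
    rw [← pow_add, hnorm] at hI
    exact ⟨i + j, (pow_add _ _ _).symm, Nat.pow_right_injective hq.two_le hI⟩
  rw [idealCount_apply (pow_ne_zero k hq.ne_zero)]
  split_ifs with hfk
  · obtain ⟨l, rfl⟩ := hfk
    refine Nat.card_eq_one_iff_exists.2 ⟨⟨P ^ l, hnorm l⟩, fun ⟨I, hI⟩ => ?_⟩
    obtain ⟨i, rfl, hi⟩ := hpow I hI
    obtain rfl : i = l := Nat.eq_of_mul_eq_mul_left (Nat.pos_of_ne_zero hf) hi
    rfl
  · refine Nat.card_eq_zero.2 (Or.inl ⟨fun ⟨I, hI⟩ => hfk ?_⟩)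
    obtain ⟨i, -, hi⟩ := hpow I hI
    exact ⟨i, hi.symm⟩

lemma idealCount_prime_pow_of_mul_eq {q : ℕ} (hq : q.Prime) {A B : Ideal (𝓞 K)}
    (hA : absNorm A = q) (hB : absNorm B = q) (hcop : IsCoprime A B)
    (hAB : A * B = span {(q : 𝓞 K)}) (k : ℕ) : idealCount K (q ^ k) = k + 1 := by
  have hAprime : Prime A := prime_of_prime_absNorm (hA ▸ hq)
  have hBprime : Prime B := prime_of_prime_absNorm (hB ▸ hq)
  have hnorm (i j : ℕ) : absNorm (A ^ i * B ^ j) = q ^ (i + j) := by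
    rw [map_mul, map_pow, map_pow, hA, hB, pow_add]
  rw [idealCount_apply (pow_ne_zero k hq.ne_zero), ← Nat.card_fin (k + 1)]
  refine (Nat.card_congr (Equiv.ofBijective
    (fun i : Fin (k + 1) => (⟨A ^ (i : ℕ) * B ^ (k - i), by
      rw [hnorm, Nat.add_sub_cancel' i.is_le]⟩ : {I : Ideal (𝓞 K) // absNorm I = q ^ k}))
    ⟨fun i j hij => ?_, fun ⟨I, hI⟩ => ?_⟩)).symm
  · replace hij := congrArg Subtype.val hij
    exact Fin.ext <| le_antisymm (le_of_pow_mul_pow_dvd hAprime hcop hij.dvd)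
      (le_of_pow_mul_pow_dvd hAprime hcop hij.symm.dvd)
  · obtain ⟨i, j, rfl⟩ := exists_eq_pow_mul_pow_of_absNorm_eq hAprime hBprime hAB.le hI
    rw [hnorm] at hI
    obtain rfl : i + j = k := Nat.pow_right_injective hq.two_le hI
    exact ⟨⟨i, by omega⟩, Subtype.ext (by simp)⟩

end IdealCount

/-! ### The Dedekind zeta function of a quadratic field -/

section SplittingOfPrimes

open Module NumberField Ideal

lemma isSquare_natCast_iff_exists_dvd {p q : ℕ} [Fact p.Prime] {m : ℤ} (hp : (p : ℤ) = 4 * m + 1)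
    (hq : q.Prime) (hqp : q ≠ p) :
    IsSquare (q : ZMod p) ↔ ∃ t : ℤ, (q : ℤ) ∣ t ^ 2 - t - m := by
  have : Fact q.Prime := ⟨hq⟩
  rcases eq_or_ne q 2 with rfl | hq2
  · have heven (t : ℤ) : 2 ∣ t ^ 2 - t := by
      rw [sq, ← mul_sub_one]
      exact (Int.even_mul_pred_self t).two_dvd
    rw [Nat.cast_ofNat, ZMod.exists_sq_eq_two_iff hqp.symm]
    refine ⟨fun h => ⟨0, ?_⟩, fun ⟨t, ht⟩ => ?_⟩
    · push_cast
      omega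
    · have := heven t
      push_cast at ht
      omega
  · have h2 : (2 : ZMod q) ≠ 0 := Ring.two_ne_zero (by rwa [ZMod.ringChar_zmod_n])
    have hpq : (p : ZMod q) = 4 * m + 1 := by exact_mod_cast congrArg (Int.cast : ℤ → ZMod q) hp
    rw [ZMod.exists_sq_eq_prime_iff_of_mod_four_eq_one (by omega) hq2, hpq]
    simp only [← ZMod.intCast_zmod_eq_zero_iff_dvd]
    push_cast
    refine ⟨fun ⟨y, hy⟩ => ?_, fun ⟨t, ht⟩ => ⟨2 * t - 1, by linear_combination -4 * ht⟩⟩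
    obtain ⟨t, ht⟩ := ZMod.intCast_surjective ((y + 1) / 2)
    refine ⟨t, ?_⟩
    rw [ht]
    field_simp
    linear_combination -hy

lemma isCoprime_span_pair_of_isCoprime_sub {R : Type*} [CommRing R] {q x y : R}
    (h : IsCoprime q (x - y)) : IsCoprime (span {q, x}) (span {q, y}) := by
  obtain ⟨u, v, huv⟩ := h
  rw [isCoprime_iff_sup_eq, eq_top_iff_one, ← huv]
  have hmem {z w : R} (hz : z ∈ ({q, w} : Set R)) : z ∈ span {q, w} := subset_span hz
  exact add_mem (mul_mem_left _ u (mem_sup_left (hmem (by simp))))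
    (mul_mem_left _ v (sub_mem (mem_sup_left (hmem (by simp))) (mem_sup_right (hmem (by simp)))))

lemma span_pair_mul_span_pair_of_dvd_mul {R : Type*} [CommRing R] {q x y : R}
    (hcop : IsCoprime (span {q, x}) (span {q, y})) (h : q ∣ x * y) :
    span {q, x} * span {q, y} = span {q} := by
  have hle : span {q, x} * span {q, y} ≤ span {q} := by
    rw [span_pair_mul_span_pair, span_le]
    simp [Set.insert_subset_iff, mem_span_singleton, h]
  have hsup (w : R) : span {q} ⊔ span {q, w} = span {q, w} :=
    sup_eq_right.2 (span_mono (by simp))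
  rw [← hsup x, ← hsup y]
  exact sup_mul_sup_eq_of_isCoprime hcop hle

lemma ne_top_and_ne_top_of_span_pair_mul_eq {R : Type*} [CommRing R] {q x y : R}
    (hx : x ∉ span {q}) (hy : y ∉ span {q}) (h : span {q, x} * span {q, y} = span {q}) :
    span {q, x} ≠ ⊤ ∧ span {q, y} ≠ ⊤ := by
  constructor <;> intro htop
  · rw [htop, top_mul] at h
    exact hy (h ▸ subset_span (by simp))
  · rw [htop, mul_top] at h
    exact hx (h ▸ subset_span (by simp))

namespace IsQuadraticBasis

lemma sub_intCast_notMem_span {S : Type*} [CommRing S] {m : ℤ} {b : Basis (Fin 2) ℤ S}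
    (hb : IsQuadraticBasis m b) {q : ℕ} (hq : q.Prime) (t : ℤ) :
    b 1 - t ∉ span {(q : S)} := by
  rw [mem_span_singleton]
  rintro ⟨y, hy⟩
  have hone : (1 : ℤ) = q * b.repr y 1 := by
    rw [← nsmul_eq_mul, ← zsmul_one t, ← hb.zero_eq] at hy
    simpa [-nsmul_eq_mul, -zsmul_eq_mul] using congrArg (fun z => b.repr z 1) hy
  exact (Nat.prime_iff_prime_int.1 hq).not_isUnit (IsUnit.of_mul_eq_one _ hone.symm)

variable {K : Type*} [Field K] [NumberField K] {m : ℤ} {b : Basis (Fin 2) ℤ (𝓞 K)} {q : ℕ}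

lemma idealCount_prime_pow_of_dvd (hb : IsQuadraticBasis m b) (hq : q.Prime)
    (hqm : ¬ (q : ℤ) ∣ 4 * m + 1) {t : ℤ} (ht : (q : ℤ) ∣ t ^ 2 - t - m) (k : ℕ) :
    idealCount K (q ^ k) = k + 1 := by
  have hcop : IsCoprime (q : 𝓞 K) (b 1 - t - (b 1 - (1 - t : ℤ))) := by
    have hqt : ¬ (q : ℤ) ∣ 1 - 2 * t := fun h => hqm <| by
      have hdiscr : 4 * m + 1 = (1 - 2 * t) * (1 - 2 * t) - 4 * (t ^ 2 - t - m) := by ring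
      rw [hdiscr]
      exact dvd_sub (h.mul_right _) (ht.mul_left 4)
    have hsub : b 1 - t - (b 1 - (1 - t : ℤ)) = ((1 - 2 * t : ℤ) : 𝓞 K) := by
      push_cast
      ring
    rw [hsub]
    simpa using
      ((Nat.prime_iff_prime_int.1 hq).coprime_iff_not_dvd.2 hqt).map (Int.castRingHom (𝓞 K))
  have hdvd : (q : 𝓞 K) ∣ (b 1 - t) * (b 1 - (1 - t : ℤ)) := by
    have hmul : (b 1 - t) * (b 1 - (1 - t : ℤ)) = -((t ^ 2 - t - m : ℤ) : 𝓞 K) := by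
      push_cast
      linear_combination hb.one_sq
    rw [hmul]
    exact (by exact_mod_cast Int.cast_dvd_cast (α := 𝓞 K) _ _ ht : (q : 𝓞 K) ∣ _).neg_right
  have hAB := isCoprime_span_pair_of_isCoprime_sub hcop
  have hmul := span_pair_mul_span_pair_of_dvd_mul hAB hdvd
  obtain ⟨hA, hB⟩ := ne_top_and_ne_top_of_span_pair_mul_eq (hb.sub_intCast_notMem_span hq _)
    (hb.sub_intCast_notMem_span hq _) hmul
  obtain ⟨hNA, hNB⟩ := absNorm_eq_and_eq_of_mul_eq_span hq
    (finrank_eq_two_of_basis_ringOfIntegers b) hA hB hmul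
  exact idealCount_prime_pow_of_mul_eq hq hNA hNB hAB hmul k

lemma idealCount_prime_pow_of_eq (hb : IsQuadraticBasis m b) (hq : q.Prime)
    (hqm : (q : ℤ) = 4 * m + 1) (k : ℕ) : idealCount K (q ^ k) = 1 := by
  have hsq : span {2 * b 1 - 1} * span {2 * b 1 - 1} = span {(q : 𝓞 K)} := by
    rw [span_singleton_mul_span_singleton, ← Int.cast_natCast, hqm]
    congr 2
    push_cast
    linear_combination 4 * hb.one_sq
  have hN : absNorm (span {2 * b 1 - 1}) = q ^ 1 := by
    refine Nat.pow_left_injective two_ne_zero ?_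
    simp only [sq, ← map_mul, hsq, pow_one]
    rw [absNorm_span_natCast_of_finrank_eq_two (finrank_eq_two_of_basis_ringOfIntegers b), sq]
  rw [idealCount_prime_pow_of_mul_self_le hq (prime_of_prime_absNorm (by rwa [hN, pow_one])) hN
    hsq.le, if_pos (one_dvd k)]

lemma exists_dvd_of_absNorm_eq (hb : IsQuadraticBasis m b) (hq : q.Prime) {P : Ideal (𝓞 K)}
    (hP : absNorm P = q) : ∃ t : ℤ, (q : ℤ) ∣ t ^ 2 - t - m := by
  have : NeZero q := ⟨hq.ne_zero⟩
  have : Finite (𝓞 K ⧸ P) := Nat.finite_of_card_ne_zero (hP.trans_ne hq.ne_zero)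
  have := Fintype.ofFinite (𝓞 K ⧸ P)
  let e := ZMod.ringEquivOfPrime (𝓞 K ⧸ P) hq (by rw [← Nat.card_eq_fintype_card]; exact hP)
  obtain ⟨t, ht⟩ := ZMod.intCast_surjective (e.symm (Ideal.Quotient.mk P (b 1)))
  refine ⟨t, ?_⟩
  rw [← ZMod.intCast_zmod_eq_zero_iff_dvd]
  have hsq := congrArg (e.symm ∘ Ideal.Quotient.mk P) hb.one_sq
  push_cast
  simp only [Function.comp_apply, map_pow, map_add, ← ht, eq_intCast, map_intCast] at hsq
  rw [hsq]
  ring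

lemma idealCount_prime_pow_of_forall_not_dvd (hb : IsQuadraticBasis m b) (hq : q.Prime)
    (h : ∀ t : ℤ, ¬ (q : ℤ) ∣ t ^ 2 - t - m) (k : ℕ) :
    idealCount K (q ^ k) = if Even k then 1 else 0 := by
  have hdeg := finrank_eq_two_of_basis_ringOfIntegers b
  have hprime := prime_span_natCast_of_forall_absNorm_ne hq hdeg fun P hP =>
    not_exists.2 h (hb.exists_dvd_of_absNorm_eq hq hP)
  simp only [even_iff_two_dvd]
  exact idealCount_prime_pow_of_mul_self_le hq hprime
    (absNorm_span_natCast_of_finrank_eq_two hdeg q) mul_le_left k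

end IsQuadraticBasis

end SplittingOfPrimes

section DedekindZeta

open Module NumberField Filter Topology

variable {p : ℕ} [Fact p.Prime] {K : Type*} [Field K] [NumberField K] {m : ℤ}
  {b : Basis (Fin 2) ℤ (𝓞 K)}

lemma IsQuadraticBasis.idealCount_prime_pow_eq_sum (hb : IsQuadraticBasis m b)
    (hp : (p : ℤ) = 4 * m + 1) {q : ℕ} (hq : q.Prime) (k : ℕ) :
    (idealCount K (q ^ k) : ℤ) = ∑ i ∈ range (k + 1), quadraticChar (ZMod p) q ^ i := by
  rcases eq_or_ne q p with rfl | hqp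
  · rw [hb.idealCount_prime_pow_of_eq hq hp, ZMod.natCast_self, quadraticChar_zero, zero_geom_sum,
      if_neg k.succ_ne_zero, Nat.cast_one]
  have hq0 : (q : ZMod p) ≠ 0 := by
    rwa [Ne, ZMod.natCast_eq_zero_iff, Nat.prime_dvd_prime_iff_eq Fact.out hq, eq_comm]
  have hqm : ¬ (q : ℤ) ∣ 4 * m + 1 := by
    rwa [← hp, Int.natCast_dvd_natCast, Nat.prime_dvd_prime_iff_eq hq Fact.out]
  by_cases hsq : IsSquare (q : ZMod p)
  · obtain ⟨t, ht⟩ := (isSquare_natCast_iff_exists_dvd hp hq hqp).1 hsq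
    rw [hb.idealCount_prime_pow_of_dvd hq hqm ht, (quadraticChar_one_iff_isSquare hq0).2 hsq]
    simp
  · have ht := not_exists.1 (mt (isSquare_natCast_iff_exists_dvd hp hq hqp).2 hsq)
    rw [hb.idealCount_prime_pow_of_forall_not_dvd hq ht,
      quadraticChar_neg_one_iff_not_isSquare.2 hsq, neg_one_geom_sum]
    simp only [Nat.even_add_one, ite_not]
    split_ifs <;> rfl

lemma IsQuadraticBasis.idealCount_eq_zetaMul (hb : IsQuadraticBasis m b)
    (hp : (p : ℤ) = 4 * m + 1) :
    (idealCount K : ArithmeticFunction ℂ) = (legendreChar p ℂ).zetaMul := by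
  rw [isMultiplicative_idealCount.natCast.eq_iff_eq_on_prime_powers _ _
    (legendreChar p ℂ).isMultiplicative_zetaMul]
  intro q k hq
  have hchar (i : ℕ) : toArithmeticFunction (legendreChar p ℂ ·) (q ^ i) =
      ((quadraticChar (ZMod p) q ^ i : ℤ) : ℂ) := by
    rw [← DirichletCharacter.apply_eq_toArithmeticFunction_apply _ (pow_ne_zero i hq.ne_zero),
      Nat.cast_pow, map_pow, legendreChar_apply, Int.cast_pow]
  rw [DirichletCharacter.zetaMul, ArithmeticFunction.coe_zeta_mul_apply,
    Nat.sum_divisors_prime_pow hq, ArithmeticFunction.natCoe_apply]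
  simp only [hchar, ← Int.cast_sum, ← hb.idealCount_prime_pow_eq_sum hp hq, Int.cast_natCast]

lemma IsQuadraticBasis.dedekindZeta_eq (hb : IsQuadraticBasis m b)
    (hp : (p : ℤ) = 4 * m + 1) {s : ℂ} (hs : 1 < s.re) :
    dedekindZeta K s = riemannZeta s * (legendreChar p ℂ).LFunction s := by
  have hχ : ∀ {n : ℕ}, n ≠ 0 → legendreChar p ℂ n = toArithmeticFunction (legendreChar p ℂ ·) n :=
    DirichletCharacter.apply_eq_toArithmeticFunction_apply _
  have hcount : dedekindZeta K s = LSeries (fun n => (legendreChar p ℂ).zetaMul n) s := by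
    refine LSeries_congr (fun hn => ?_) s
    rw [← hb.idealCount_eq_zetaMul hp, ArithmeticFunction.natCoe_apply, idealCount_apply hn]
  rw [hcount, DirichletCharacter.zetaMul, ArithmeticFunction.LSeries_mul',
    DirichletCharacter.LFunction_eq_LSeries _ hs,
    ← ArithmeticFunction.LSeries_zeta_eq_riemannZeta hs, LSeries_congr hχ]
  · rfl
  · exact ArithmeticFunction.LSeriesSummable_zeta_iff.2 hs
  · exact (LSeriesSummable_congr s hχ).1 <|
      DirichletCharacter.LSeriesSummable_of_one_lt_re _ hs

lemma tendsto_ofReal_nhdsGT_nhdsNE (x : ℝ) :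
    Tendsto (fun s : ℝ => (s : ℂ)) (𝓝[>] x) (𝓝[≠] (x : ℂ)) :=
  (Complex.continuous_ofReal.tendsto x).inf <| tendsto_principal_principal.2 fun _ hs =>
    Complex.ofReal_injective.ne hs.ne'

lemma IsQuadraticBasis.dedekindZeta_residue_eq_LFunction_one (hb : IsQuadraticBasis m b)
    (hp : (p : ℤ) = 4 * m + 1) :
    (dedekindZeta_residue K : ℂ) = (legendreChar p ℂ).LFunction 1 := by
  have hnhds := Complex.ofReal_one ▸ tendsto_ofReal_nhdsGT_nhdsNE 1
  have hL : Tendsto (fun s : ℝ => (legendreChar p ℂ).LFunction s) (𝓝[>] 1)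
      (𝓝 ((legendreChar p ℂ).LFunction 1)) :=
    ((DirichletCharacter.differentiable_LFunction
      (legendreChar_ne_one (m := p / 4) (by omega))).continuous.tendsto 1).comp
        (hnhds.mono_right nhdsWithin_le_nhds)
  have hprod := (riemannZeta_residue_one.comp hnhds).mul hL
  rw [one_mul] at hprod
  refine tendsto_nhds_unique (tendsto_sub_one_mul_dedekindZeta_nhdsGT K) (hprod.congr' ?_)
  filter_upwards [self_mem_nhdsWithin] with s hs
  rw [Function.comp_apply, hb.dedekindZeta_eq hp (by rwa [Complex.ofReal_re]), mul_assoc]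

end DedekindZeta

/-! ### The determinant in terms of the fundamental unit -/

section Determinant

open Module NumberField

lemma isIntegral_of_sq_add_int_mul_eq_one {r : ℚ} {n : ℤ} (h : r ^ 2 + n * r = 1) :
    IsIntegral ℤ r :=
  ⟨X ^ 2 + C n * X - 1, by monicity!, by
    simp only [eval₂_sub, eval₂_add, eval₂_mul, eval₂_pow, eval₂_X, eval₂_C, eval₂_one]
    rw [eq_intCast, h, sub_self]⟩

lemma sq_eq_one_of_sq_add_two_mul_eq_one {r : ℚ} {n : ℤ} (h : r ^ 2 + 2 * n * r = 1) :
    r ^ 2 = 1 := by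
  obtain ⟨z, rfl⟩ := IsIntegrallyClosed.isIntegral_iff.1 <|
    isIntegral_of_sq_add_int_mul_eq_one (r := r) (n := 2 * n) (by exact_mod_cast h)
  have hz : z * (z + 2 * n) = 1 := by
    rw [eq_intCast] at h
    exact_mod_cast (by linear_combination h : (z : ℚ) * (z + 2 * n) = 1)
  rcases Int.eq_one_or_neg_one_of_mul_eq_one hz with rfl | rfl <;> simp

/-- A number `x = r + s * √d` with `2 * n = x⁻¹ - x` is a root of `X ^ 2 + 2 * n * X - 1`, whose
irrational roots have trace `-2 * n` and whose only possible rational roots are `±1`. -/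
lemma intCast_eq_neg_of_two_mul_eq_inv_sub {d : ℕ} (hd : Irrational √d) {n : ℤ} {r s : ℚ}
    (hx : 1 < r + s * √d) (hn : 2 * (n : ℝ) = (r + s * √d)⁻¹ - (r + s * √d)) :
    (n : ℝ) = -r := by
  have hsqrt : √(d : ℝ) ^ 2 = d := Real.sq_sqrt (Nat.cast_nonneg d)
  have hroot : ((r ^ 2 + d * s ^ 2 + 2 * n * r - 1 : ℚ) : ℝ) +
      ((2 * s * (r + n) : ℚ) : ℝ) * √d = 0 := by
    have hinv := mul_inv_cancel₀ (zero_lt_one.trans hx).ne'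
    push_cast
    linear_combination (r + s * √d) * hn + hinv - s ^ 2 * hsqrt
  have hcoeff : 2 * s * (r + n) = 0 := by
    by_contra hne
    exact ((hd.ratCast_mul hne).ratCast_add _).ne_zero hroot
  rcases mul_eq_zero.1 hcoeff with hs | hrn
  · obtain rfl : s = 0 := by linarith
    have hr : r ^ 2 = 1 := sq_eq_one_of_sq_add_two_mul_eq_one (n := n) <| by
      have : ((r ^ 2 + 2 * n * r : ℚ) : ℝ) = (1 : ℚ) := by
        push_cast at hroot ⊢
        linear_combination hroot
      exact_mod_cast this
    have hr1 : 1 < r := by exact_mod_cast (by simpa using hx : 1 < (r : ℝ))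
    nlinarith
  · have : (r : ℝ) + n = 0 := by exact_mod_cast hrn
    linarith

lemma eq_sqrt_mul_inv_and_eq_sqrt_mul {d x y z : ℝ} (hx : 0 < x) (hy : 0 < y) (hz : 0 < z)
    (hxy : x * y = d) (hlog : Real.log y - Real.log x = 2 * Real.log z) :
    x = √d * z⁻¹ ∧ y = √d * z := by
  have hyz : y = x * z ^ 2 := by
    refine Real.log_injOn_pos hy (by positivity : 0 < x * z ^ 2) ?_
    rw [Real.log_mul hx.ne' (by positivity), Real.log_pow]
    push_cast
    linarith
  have hsqrt : √d = x * z := by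
    rw [← hxy, hyz, show x * (x * z ^ 2) = (x * z) ^ 2 by ring, Real.sqrt_sq (by positivity)]
  rw [hsqrt, hyz]
  constructor
  · field_simp
  · ring

variable {p m : ℕ} [Fact p.Prime] {ψ : AddChar (ZMod p) ℂ} {K : Type*} [Field K] [NumberField K]
  {b : Basis (Fin 2) ℤ (𝓞 K)} {f : K →+* ℝ} {ε : (𝓞 K)ˣ}

lemma quadraticChar_two_eq_ite (hp : p = 4 * m + 1) :
    quadraticChar (ZMod p) 2 = ((if p % 8 = 1 then 1 else -1 : ℤˣ) : ℤ) := by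
  rw [quadraticChar_two (ringChar_ne_two_of_card (zmod_card_eq hp)), ZMod.card,
    ZMod.χ₈_nat_eq_if_mod_eight]
  have hodd : p % 2 ≠ 0 := by omega
  have hne7 : p % 8 ≠ 7 := by omega
  simp only [hodd, hne7, or_false, if_false]
  split_ifs <;> rfl

lemma two_mul_sqrt_mul_det_evilMatrix (hp : p = 4 * m + 1) (hψ : Function.Injective ψ)
    (hgauss : gaussSum (legendreChar p ℂ) ψ = (√p : ℝ)) {s : ℤˣ}
    (hs : quadraticChar (ZMod p) 2 = s) :
    2 * √p * ((evilMatrix p (2 * m + 1)).det : ℝ) =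
      ‖cyclotomicProd ψ 1‖ * ‖cyclotomicProd ψ (-s)‖ / ‖cyclotomicProd ψ (-1)‖ -
        ‖cyclotomicProd ψ (-1)‖ * ‖cyclotomicProd ψ s‖ / ‖cyclotomicProd ψ 1‖ := by
  have hdet := two_mul_gaussSum_mul_det_evilMatrix hp hψ hs
  have hnorm := ofReal_norm_cyclotomicProd hp hψ
  rw [hgauss, ← hnorm 1, ← hnorm (-1), ← hnorm s, ← hnorm (-s), ← Complex.ofReal_intCast] at hdet
  exact_mod_cast hdet

/-- Both sides of the class number formula compute `√p * L(1, χ)`. -/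
lemma log_norm_cyclotomicProd_sub_log (hp : p = 4 * m + 1) (hψ : Function.Injective ψ)
    (hgauss : gaussSum (legendreChar p ℂ) ψ = (√p : ℝ)) (hb : IsQuadraticBasis (m : ℤ) b)
    (hε : IsFundamentalUnit f ε) :
    Real.log ‖cyclotomicProd ψ (-1)‖ - Real.log ‖cyclotomicProd ψ 1‖ =
      2 * Real.log (f (algebraMap (𝓞 K) K ε) ^ classNumber K) := by
  have hp' : (p : ℤ) = 4 * m + 1 := by exact_mod_cast hp
  have hL := gaussSum_mul_LFunction_legendreChar_one hp hψ
  rw [hgauss, ← hb.dedekindZeta_residue_eq_LFunction_one hp', hε.dedekindZeta_residue_eq hb, ← hp',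
    Int.cast_natCast, Nat.abs_cast] at hL
  have hsqrt : √(p : ℝ) ≠ 0 := (Real.sqrt_pos.2 (by exact_mod_cast (Fact.out : p.Prime).pos)).ne'
  rw [Real.log_pow, ← Complex.ofReal_inj, ← hL, ← Complex.ofReal_mul, mul_div_cancel₀ _ hsqrt,
    mul_assoc]

lemma norm_cyclotomicProd_eq (hp : p = 4 * m + 1) (hψ : Function.Injective ψ)
    (hgauss : gaussSum (legendreChar p ℂ) ψ = (√p : ℝ)) (hb : IsQuadraticBasis (m : ℤ) b)
    (hε : IsFundamentalUnit f ε) :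
    ‖cyclotomicProd ψ 1‖ = √p * (f (algebraMap (𝓞 K) K ε) ^ classNumber K)⁻¹ ∧
      ‖cyclotomicProd ψ (-1)‖ = √p * f (algebraMap (𝓞 K) K ε) ^ classNumber K := by
  refine eq_sqrt_mul_inv_and_eq_sqrt_mul (norm_pos_iff.2 (cyclotomicProd_ne_zero hψ 1))
    (norm_pos_iff.2 (cyclotomicProd_ne_zero hψ (-1))) (pow_pos (zero_lt_one.trans hε.one_lt) _) ?_
    (log_norm_cyclotomicProd_sub_log hp hψ hgauss hb hε)
  rw [← norm_mul, cyclotomicProd_mul_cyclotomicProd_neg hψ 1, Complex.norm_natCast]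

theorem two_mul_det_evilMatrix (hp : p = 4 * m + 1) (hb : IsQuadraticBasis (m : ℤ) b)
    (hε : IsFundamentalUnit f ε) {k : ℕ}
    (hk : k = if p % 8 = 1 then classNumber K else 3 * classNumber K) :
    2 * ((evilMatrix p (2 * m + 1)).det : ℝ) =
      (f (algebraMap (𝓞 K) K ε) ^ k)⁻¹ - f (algebraMap (𝓞 K) K ε) ^ k := by
  obtain ⟨ψ, hψ, hgauss⟩ := exists_injective_gaussSum_eq_sqrt hp
  obtain ⟨hprod_one, hprod_neg_one⟩ := norm_cyclotomicProd_eq hp hψ hgauss hb hε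
  have hdet := two_mul_sqrt_mul_det_evilMatrix hp hψ hgauss (quadraticChar_two_eq_ite hp)
  have hsqrt : 0 < √(p : ℝ) := Real.sqrt_pos.2 (by exact_mod_cast (Fact.out : p.Prime).pos)
  have hpow : 0 < f (algebraMap (𝓞 K) K ε) ^ classNumber K :=
    pow_pos (zero_lt_one.trans hε.one_lt) _
  refine mul_left_cancel₀ hsqrt.ne' ?_
  rw [mul_left_comm, ← mul_assoc, hdet, hk]
  split_ifs
  · rw [hprod_one, hprod_neg_one]
    field_simp
  · rw [neg_neg, hprod_one, hprod_neg_one, pow_mul']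
    field_simp

lemma exists_isQuadraticBasis_of_sq_eq_prime (hp : p = 4 * m + 1) (hdeg : finrank ℚ K = 2) {x : K}
    (hx : x ^ 2 = p) : ∃ b : Basis (Fin 2) ℤ (𝓞 K), IsQuadraticBasis (m : ℤ) b := by
  have hp' : 4 * (m : ℤ) + 1 = p := by exact_mod_cast hp.symm
  have hprime : Prime (p : ℤ) := Nat.prime_iff_prime_int.1 Fact.out
  refine exists_isQuadraticBasis_ringOfIntegers hdeg ?_ ?_ (x := x) ?_
  · exact hp' ▸ hprime.squarefree
  · exact hp' ▸ hprime.irreducible.not_isSquare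
  · rw [hx, hp]
    push_cast
    rfl

end Determinant

end EvilDeterminant

/-- Chapman's "evil determinant" for p ≡ 1 (mod 4): det C = -a, where
a + b√p = ε^h (resp. ε^{3h}) for p ≡ 1 (resp. 5) mod 8, ε the fundamental
unit and h the class number of ℚ(√p). -/
theorem chapman_evil_determinant (p : ℕ) [Fact (Nat.Prime p)] (hp : p % 4 = 1)
    (K : Type) [Field K] [NumberField K]
    (hdeg : Module.finrank ℚ K = 2)
    (hsq : ∃ x : K, x ^ 2 = (p : K))
    (f : K →+* ℝ)
    (ε : (NumberField.RingOfIntegers K)ˣ)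
    (hε1 : 1 < f (algebraMap (NumberField.RingOfIntegers K) K (ε : NumberField.RingOfIntegers K)))
    (hεmin : ∀ u : (NumberField.RingOfIntegers K)ˣ,
      1 < f (algebraMap (NumberField.RingOfIntegers K) K (u : NumberField.RingOfIntegers K)) →
      f (algebraMap (NumberField.RingOfIntegers K) K (ε : NumberField.RingOfIntegers K)) ≤
        f (algebraMap (NumberField.RingOfIntegers K) K (u : NumberField.RingOfIntegers K)))
    (a b : ℝ)
    (ha : ∃ A : ℤ, 2 * a = (A : ℝ)) (hb : ∃ B : ℤ, 2 * b = (B : ℝ))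
    (hab : a + b * Real.sqrt p =
      f (algebraMap (NumberField.RingOfIntegers K) K (ε : NumberField.RingOfIntegers K)) ^
        (if p % 8 = 1 then NumberField.classNumber K else 3 * NumberField.classNumber K)) :
    (((Matrix.of fun i j : Fin ((p - 1) / 2 + 1) =>
        legendreSym p ((j : ℤ) - (i : ℤ))).det : ℤ) : ℝ) = -a := by
  obtain ⟨x, hx⟩ := hsq
  obtain ⟨A, hA⟩ := ha
  obtain ⟨B, hB⟩ := hb
  obtain ⟨m, hm⟩ : ∃ m, p = 4 * m + 1 := ⟨p / 4, by lia⟩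
  obtain ⟨θ, hθ⟩ := EvilDeterminant.exists_isQuadraticBasis_of_sq_eq_prime hm hdeg hx
  obtain rfl : a = ((A / 2 : ℚ) : ℝ) := by push_cast; linarith
  obtain rfl : b = ((B / 2 : ℚ) : ℝ) := by push_cast; linarith
  have hdim : (p - 1) / 2 + 1 = 2 * m + 1 := by lia
  have hexp : (if p % 8 = 1 then NumberField.classNumber K else 3 * NumberField.classNumber K) ≠
      0 := by
    have : NumberField.classNumber K ≠ 0 := NumberField.classNumber_ne_zero K
    split_ifs <;> lia
  have hdet := EvilDeterminant.two_mul_det_evilMatrix hm hθ ⟨hε1, hεmin⟩ rfl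
  rw [← hab, ← hdim] at hdet
  exact EvilDeterminant.intCast_eq_neg_of_two_mul_eq_inv_sub (Nat.Prime.irrational_sqrt Fact.out)
    (hab ▸ one_lt_pow₀ hε1 hexp) hdet
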